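/- Let D ⊆ [0,1] be an interval, let 0 ≤ a < 2 and C > 0, and let F : ℝ → ℝ be continuous with |F(s)| ≤ C·max(e^{a·s}, e^{−a·s}) for all s ∈ ℝ. Then lim_{δ→0⁺} ∫_D F( log q_min(x,δ) + (1/2)·log δ ) dx = Leb(D)·∫_ℝ F(s)·η_log(s) ds. -/

import Mathlib

open MeasureTheory Filter

/-- The limiting density of the logarithm of smallest denominators. -/
noncomputable def etaLog (s : ℝ) : ℝ :=
  if s ≤ 0 then 6 / Real.pi ^ 2 * Real.exp (2 * s)
  else if s ≤ Real.log 2 then 6 / Real.pi ^ 2 * (-Real.exp (2 * s) + 2 + 4 * s)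
  else 6 / Real.pi ^ 2 * (-Real.exp (2 * s) + 2
    + 2 * Real.exp (2 * s) * Real.sqrt (1 / 4 - Real.exp (-2 * s))
    - 4 * Real.log (1 / 2 + Real.sqrt (1 / 4 - Real.exp (-2 * s))))

/-- The smallest denominator of all rationals in the interval `(x - δ/2, x + δ/2)`. -/
noncomputable def qmin (x δ : ℝ) : ℕ :=
  sInf {q : ℕ | 0 < q ∧ ∃ p : ℤ, x - δ / 2 < (p : ℝ) / q ∧ (p : ℝ) / q < x + δ / 2}



lemma tau_pow_four_le (n : ℕ) (hn : n ≠ 0) : (n.divisors.card) ^ 4 ≤ 41 ^ 16 * n := by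
  have h1 : ∀ v : ℕ, (v + 1) ^ 4 ≤ 16 ^ v := by
    intro v
    have : v + 1 ≤ 2 ^ v := Nat.lt_two_pow_self
    calc (v + 1) ^ 4 ≤ (2 ^ v) ^ 4 := Nat.pow_le_pow_left this 4
      _ = 16 ^ v := by rw [← pow_mul, mul_comm, pow_mul]; norm_num
  have h2 : ∀ v : ℕ, (v + 1) ^ 4 ≤ 41 * 2 ^ v := by
    intro v
    by_cases hv : v ≤ 6
    · interval_cases v <;> norm_num
    · push Not at hv
      induction v, hv using Nat.le_induction with
      | base => norm_num
      | succ v hv ih =>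
        have : (v + 1 + 1) ^ 4 ≤ 2 * (v + 1) ^ 4 := by
          obtain ⟨k, rfl⟩ := Nat.exists_eq_add_of_le hv
          ring_nf
          nlinarith [sq_nonneg k, Nat.zero_le (k ^ 3), Nat.zero_le (k ^ 4), Nat.zero_le k]
        have e : (2:ℕ) ^ (v + 1) = 2 * 2 ^ v := by rw [pow_succ, mul_comm]
        rw [e]
        linarith
  rw [Nat.card_divisors hn, ← Finset.prod_pow]
  have h3 : ∀ p ∈ n.primeFactors, (n.factorization p + 1) ^ 4 ≤
      (if p < 16 then 41 else 1) * p ^ (n.factorization p) := by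
    intro p hp
    have hp2 := (Nat.prime_of_mem_primeFactors hp).two_le
    split_ifs with h
    · exact (h2 _).trans (Nat.mul_le_mul_left _ (Nat.pow_le_pow_left hp2 _))
    · rw [one_mul]
      exact (h1 _).trans (Nat.pow_le_pow_left (by omega) _)
  refine (Finset.prod_le_prod' h3).trans ?_
  rw [Finset.prod_mul_distrib]
  refine Nat.mul_le_mul ?_ ?_
  · rw [Finset.prod_ite]
    rw [Finset.prod_const, Finset.prod_const, one_pow, mul_one]
    refine Nat.pow_le_pow_right (n := 41) (by norm_num) ?_
    calc _ ≤ (Finset.range 16).card := Finset.card_le_card (by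
            intro p hp
            simp at hp
            simpa using hp.2)
      _ = 16 := by simp
  · exact (Nat.prod_factorization_pow_eq_self hn).le

lemma le_totient_mul_tau (n : ℕ) (hn : n ≠ 0) : n ≤ n.totient * n.divisors.card := by
  conv_lhs => rw [← Nat.sum_totient n]
  rw [mul_comm, ← smul_eq_mul]
  apply Finset.sum_le_card_nsmul
  intro d hd
  exact Nat.le_of_dvd (Nat.totient_pos.2 (Nat.pos_of_ne_zero hn))
    (Nat.totient_dvd_of_dvd (Nat.dvd_of_mem_divisors hd))

section
variable {q : ℕ} [NeZero q]

lemma card_ann_le (k : ZMod q) :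
    (Finset.univ.filter fun x : ZMod q => k * x = 0).card ≤ Nat.gcd k.val q := by
  have hpos : 0 < Nat.gcd k.val q := Nat.gcd_pos_of_pos_right _ (NeZero.pos q)
  refine le_trans (Finset.card_le_card ?_) (IsAddCyclic.card_nsmul_eq_zero_le (α := ZMod q) hpos)
  intro x hx
  simp only [Finset.mem_filter, Finset.mem_univ, true_and] at hx ⊢
  rw [nsmul_eq_mul]
  have h := Nat.gcd_eq_gcd_ab k.val q
  have : ((Nat.gcd k.val q : ℕ) : ZMod q) = k * (Nat.gcdA k.val q : ZMod q) := by
    have := congrArg (Int.cast : ℤ → ZMod q) h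
    push_cast at this
    rw [this]
    simp
  rw [this, mul_right_comm, hx, zero_mul]

lemma card_affine_le (k c : ZMod q) :
    (Finset.univ.filter fun x : ZMod q => k * x = c).card ≤ 
    (Finset.univ.filter fun x : ZMod q => k * x = 0).card := by
  rcases (Finset.univ.filter fun x : ZMod q => k * x = c).eq_empty_or_nonempty with h | ⟨y, hy⟩
  · simp [h]
  · simp at hy
    apply Finset.card_le_card_of_injOn (fun x => x - y)
    · intro x hx
      simp at hx ⊢
      rw [mul_sub, hx, hy, sub_self]
    · intro a _ b _ h
      simpa using h

lemma sum_gcd_le : ∑ a : ZMod q, Nat.gcd a.val q ≤ q * q.divisors.card := by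
  have h0 : ∀ a : ZMod q, Nat.gcd a.val q = ∑ d ∈ q.divisors, if Nat.gcd a.val q = d then d else 0 := by
    intro a
    rw [Finset.sum_ite_eq, if_pos]
    simp [Nat.gcd_dvd_right, NeZero.ne q]
  rw [Finset.sum_congr rfl (fun a _ => h0 a), Finset.sum_comm, mul_comm, ← smul_eq_mul]
  apply Finset.sum_le_card_nsmul
  intro d hd
  rw [← Finset.sum_filter, Finset.sum_const, smul_eq_mul]
  have hdq := Nat.dvd_of_mem_divisors hd
  have : (Finset.univ.filter fun a : ZMod q => Nat.gcd a.val q = d).card ≤ q / d := by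
    have : (Finset.univ.filter fun a : ZMod q => Nat.gcd a.val q = d).card ≤ (Finset.range (q / d)).card := by
      apply Finset.card_le_card_of_injOn (fun a => a.val / d)
      · intro a ha
        simp at ha ⊢
        refine Nat.div_lt_div_of_lt_of_dvd hdq (ZMod.val_lt a)
      · intro a ha b hb hab
        simp at ha hb hab
        have h1 : d ∣ a.val := ha ▸ Nat.gcd_dvd_left _ _
        have h2 : d ∣ b.val := hb ▸ Nat.gcd_dvd_left _ _
        apply ZMod.val_injective
        rw [← Nat.div_mul_cancel h1, ← Nat.div_mul_cancel h2, hab]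
    simpa using this
  calc _ ≤ q / d * d := Nat.mul_le_mul_right _ this
    _ = q := Nat.div_mul_cancel hdq

/-- number of additive quadruples of units. -/
lemma card_quad_le :
    (Finset.univ.filter fun z : ((ZMod q)ˣ × (ZMod q)ˣ) × ((ZMod q)ˣ × (ZMod q)ˣ) =>
      ((z.1.1 : ZMod q) + z.1.2 = z.2.1 + z.2.2) ∧
      (((z.1.1⁻¹ : (ZMod q)ˣ) : ZMod q) + (z.1.2⁻¹ : (ZMod q)ˣ) 
        = (z.2.1⁻¹ : (ZMod q)ˣ) + (z.2.2⁻¹ : (ZMod q)ˣ))).card ≤ 2 * (q * q.divisors.card) ^ 2 := by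
  classical
  let T : Finset (ZMod q × ZMod q × ZMod q) :=
    Finset.univ.filter fun z => z.1 * z.2.1 * 2 * z.2.2 = z.1 * z.2.1 * (z.1 + z.2.1)
  have h1 : (Finset.univ.filter fun z : ((ZMod q)ˣ × (ZMod q)ˣ) × ((ZMod q)ˣ × (ZMod q)ˣ) =>
      ((z.1.1 : ZMod q) + z.1.2 = z.2.1 + z.2.2) ∧
      (((z.1.1⁻¹ : (ZMod q)ˣ) : ZMod q) + (z.1.2⁻¹ : (ZMod q)ˣ) 
        = (z.2.1⁻¹ : (ZMod q)ˣ) + (z.2.2⁻¹ : (ZMod q)ˣ))).card ≤ T.card := by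
    apply Finset.card_le_card_of_injOn 
      (fun z => ((z.2.1 : ZMod q) - z.1.1, (z.2.1 : ZMod q) - z.1.2, (z.2.1 : ZMod q)))
    · rintro ⟨⟨x1, x2⟩, ⟨x3, x4⟩⟩ hz
      simp only [Finset.coe_filter, Finset.mem_univ, true_and, Set.mem_ofPred_eq, T] at hz ⊢
      obtain ⟨h1, h2⟩ := hz
      have e1 : (x1 : ZMod q) * (x1⁻¹ : (ZMod q)ˣ) = 1 := Units.mul_inv x1
      have e2 : (x2 : ZMod q) * (x2⁻¹ : (ZMod q)ˣ) = 1 := Units.mul_inv x2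
      have e3 : (x3 : ZMod q) * (x3⁻¹ : (ZMod q)ˣ) = 1 := Units.mul_inv x3
      have e4 : (x4 : ZMod q) * (x4⁻¹ : (ZMod q)ˣ) = 1 := Units.mul_inv x4
      have h3 : ((x1 : ZMod q) + x2) * (x3 * x4) = (x3 + x4) * (x1 * x2) := by
        have := congrArg (fun t => (x1 : ZMod q) * x2 * x3 * x4 * t) h2
        linear_combination this - (x2 * x3 * x4 : ZMod q) * e1 - (x1 * x3 * x4 : ZMod q) * e2
          + (x1 * x2 * x4 : ZMod q) * e3 + (x1 * x2 * x3 : ZMod q) * e4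
      have h4 : (x4 : ZMod q) = x1 + x2 - x3 := by linear_combination -h1
      rw [h4] at h3
      linear_combination -h3
    · rintro ⟨⟨x1, x2⟩, ⟨x3, x4⟩⟩ hz ⟨⟨y1, y2⟩, ⟨y3, y4⟩⟩ hy h
      simp only [Finset.coe_filter, Finset.mem_univ, true_and, Set.mem_ofPred_eq] at hz hy
      simp only [Prod.mk.injEq] at h ⊢
      obtain ⟨a1, a2, a3⟩ := h
      refine ⟨⟨Units.ext ?_, Units.ext ?_⟩, ⟨Units.ext a3, Units.ext ?_⟩⟩
      · linear_combination a3 - a1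
      · linear_combination a3 - a2
      · linear_combination hy.1 - hz.1 + (a3 - a1) + (a3 - a2) - a3
  refine h1.trans ?_
  have h2 : T.card = ∑ a : ZMod q, ∑ b : ZMod q, 
      (Finset.univ.filter fun x : ZMod q => a * b * 2 * x = a * b * (a + b)).card := by
    simp only [T, Finset.card_filter, Fintype.sum_prod_type]
  rw [h2]
  have h3 : ∀ a b : ZMod q, (Finset.univ.filter fun x : ZMod q => a * b * 2 * x = a * b * (a + b)).card
      ≤ 2 * (Nat.gcd a.val q * Nat.gcd b.val q) := by
    intro a b
    refine ((card_affine_le _ _).trans (card_ann_le _)).trans ?_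
    have e : (a * b * 2).val = (a.val * b.val * 2) % q := by
      conv_lhs => rw [← ZMod.natCast_zmod_val a, ← ZMod.natCast_zmod_val b]
      rw [← ZMod.val_natCast]
      push_cast
      rfl
    have e2 : Nat.gcd ((a.val * b.val * 2) % q) q = Nat.gcd (a.val * b.val * 2) q := by
      rw [Nat.gcd_comm (a.val * b.val * 2) q, Nat.gcd_rec q]
    rw [e, e2]
    have hq : ∀ x, 0 < Nat.gcd x q := fun x => Nat.gcd_pos_of_pos_right _ (NeZero.pos q)
    refine (Nat.le_of_dvd (Nat.mul_pos (hq _) (hq _))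
      (Nat.gcd_mul_left_dvd_mul_gcd q (a.val * b.val) 2)).trans ?_
    rw [mul_comm]
    exact Nat.mul_le_mul (Nat.gcd_le_left _ (by norm_num))
      (Nat.le_of_dvd (Nat.mul_pos (hq _) (hq _)) (Nat.gcd_mul_left_dvd_mul_gcd _ _ _))
  calc _ ≤ ∑ a : ZMod q, ∑ b : ZMod q, 2 * (Nat.gcd a.val q * Nat.gcd b.val q) :=
        Finset.sum_le_sum fun a _ => Finset.sum_le_sum fun b _ => h3 a b
    _ = 2 * (∑ a : ZMod q, Nat.gcd a.val q) ^ 2 := by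
        rw [sq, Finset.sum_mul_sum, Finset.mul_sum]
        simp_rw [Finset.mul_sum]
    _ ≤ _ := Nat.mul_le_mul_left _ (Nat.pow_le_pow_left sum_gcd_le 2)
end


/-- Kloosterman sums. -/
noncomputable def kl (q : ℕ) [NeZero q] (a b : ZMod q) : ℂ :=
  ∑ x : (ZMod q)ˣ, ZMod.stdAddChar (a * (x : ZMod q) + b * ((x⁻¹ : (ZMod q)ˣ) : ZMod q))

section
variable {q : ℕ} [NeZero q]

lemma second_moment {X : Type*} [Fintype X] (f g : X → ZMod q) :
    ∑ a : ZMod q, ∑ b : ZMod q, ‖∑ x, ZMod.stdAddChar (a * f x + b * g x)‖ ^ 2 =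
    (q : ℝ) ^ 2 * (Finset.univ.filter fun z : X × X => f z.1 = f z.2 ∧ g z.1 = g z.2).card := by
  classical
  have key : ∀ a b : ZMod q, ((‖∑ x, ZMod.stdAddChar (a * f x + b * g x)‖ ^ 2 : ℝ) : ℂ) =
      ∑ z : X × X, ZMod.stdAddChar (a * (f z.1 - f z.2)) * ZMod.stdAddChar (b * (g z.1 - g z.2)) := by
    intro a b
    push_cast
    rw [← Complex.mul_conj', map_sum, Finset.sum_mul_sum, Fintype.sum_prod_type]
    refine Finset.sum_congr rfl fun x _ => Finset.sum_congr rfl fun y _ => ?_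
    rw [← AddChar.map_neg_eq_conj, ← AddChar.map_add_eq_mul, ← AddChar.map_add_eq_mul]
    congr 1
    ring
  have : ((∑ a : ZMod q, ∑ b : ZMod q, ‖∑ x, ZMod.stdAddChar (a * f x + b * g x)‖ ^ 2 : ℝ) : ℂ) =
    (((q : ℝ) ^ 2 * (Finset.univ.filter fun z : X × X => f z.1 = f z.2 ∧ g z.1 = g z.2).card : ℝ) : ℂ) := by
    rw [Complex.ofReal_sum]
    simp_rw [Complex.ofReal_sum, key]
    have h1 : ∀ a : ZMod q, ∑ b : ZMod q, ∑ z : X × X, ZMod.stdAddChar (a * (f z.1 - f z.2)) * ZMod.stdAddChar (b * (g z.1 - g z.2))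
       = ∑ z : X × X, ∑ b : ZMod q, (ZMod.stdAddChar (a * (f z.1 - f z.2)) * ZMod.stdAddChar (b * (g z.1 - g z.2)) : ℂ) := fun a => Finset.sum_comm
    simp_rw [h1]
    rw [Finset.sum_comm]
    simp_rw [← Finset.mul_sum, AddChar.sum_mulShift _ (ZMod.isPrimitive_stdAddChar q), ← Finset.sum_mul,
      AddChar.sum_mulShift _ (ZMod.isPrimitive_stdAddChar q)]
    rw [Finset.card_filter]
    push_cast
    rw [Finset.mul_sum]
    refine Finset.sum_congr rfl fun z _ => ?_
    simp only [sub_eq_zero, ZMod.card]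
    by_cases h1 : f z.1 = f z.2 <;> by_cases h2 : g z.1 = g z.2 <;> simp [h1, h2, sq]
  exact_mod_cast this

lemma fourth_moment : ∑ a : ZMod q, ∑ b : ZMod q, ‖kl q a b‖ ^ 4 ≤
    2 * (q : ℝ) ^ 4 * (q.divisors.card : ℝ) ^ 2 := by
  have h := second_moment (q := q) (X := (ZMod q)ˣ × (ZMod q)ˣ) (fun x => x.1 + x.2)
    (fun x => ((x.1⁻¹ : (ZMod q)ˣ) : ZMod q) + (x.2⁻¹ : (ZMod q)ˣ))
  have e : ∀ a b : ZMod q, ‖kl q a b‖ ^ 4 = ‖∑ x : (ZMod q)ˣ × (ZMod q)ˣ, ZMod.stdAddChar (a * ((x.1 : ZMod q) + (x.2 : ZMod q)) 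
      + b * (((x.1⁻¹ : (ZMod q)ˣ) : ZMod q) + ((x.2⁻¹ : (ZMod q)ˣ) : ZMod q)))‖ ^ 2 := by
    intro a b
    rw [show (4 : ℕ) = 2 * 2 by norm_num, pow_mul, ← norm_pow]
    congr 2
    rw [sq, kl, Finset.sum_mul_sum, Fintype.sum_prod_type]
    refine Finset.sum_congr rfl fun x _ => Finset.sum_congr rfl fun y _ => ?_
    rw [← AddChar.map_add_eq_mul]
    congr 1
    ring
  simp_rw [e]
  rw [h]
  have h2 := card_quad_le (q := q)
  have h3 : ((Finset.univ.filter fun z : ((ZMod q)ˣ × (ZMod q)ˣ) × ((ZMod q)ˣ × (ZMod q)ˣ) =>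
      ((z.1.1 : ZMod q) + z.1.2 = z.2.1 + z.2.2) ∧
      (((z.1.1⁻¹ : (ZMod q)ˣ) : ZMod q) + (z.1.2⁻¹ : (ZMod q)ˣ) 
        = (z.2.1⁻¹ : (ZMod q)ˣ) + (z.2.2⁻¹ : (ZMod q)ˣ))).card : ℝ) ≤ 2 * (q * q.divisors.card) ^ 2 := by
    exact_mod_cast h2
  calc _ ≤ (q : ℝ) ^ 2 * (2 * (q * q.divisors.card) ^ 2) := by
        gcongr
    _ = _ := by ring

lemma kl_shift (m n : ZMod q) (t : (ZMod q)ˣ) :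
    kl q (m * t) (n * (t⁻¹ : (ZMod q)ˣ)) = kl q m n := by
  unfold kl
  refine Fintype.sum_equiv (Equiv.mulLeft t) _ _ fun x => ?_
  congr 1
  simp
  ring

lemma kl_symm (m n : ZMod q) : kl q m n = kl q n m := by
  unfold kl
  refine Fintype.sum_equiv (Equiv.inv _) _ _ fun x => ?_
  congr 1
  simp
  ring

lemma kl_bound_aux (m : ℤ) (hm : m ≠ 0) (n : ZMod q) :
    (q.totient : ℝ) * ‖kl q m n‖ ^ 4 ≤ m.natAbs * (2 * (q : ℝ) ^ 4 * (q.divisors.card : ℝ) ^ 2) := by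
  classical
  have h1 : (q.totient : ℝ) * ‖kl q m n‖ ^ 4 = ∑ t : (ZMod q)ˣ, ‖kl q (m * t) (n * (t⁻¹ : (ZMod q)ˣ))‖ ^ 4 := by
    simp_rw [kl_shift]
    simp [ZMod.card_units_eq_totient]
  rw [h1]
  refine le_trans ?_ (mul_le_mul_of_nonneg_left (fourth_moment (q := q)) (by positivity))
  let φ : (ZMod q)ˣ → ZMod q × ZMod q := fun t => (m * t, n * (t⁻¹ : (ZMod q)ˣ))
  have h2 : ∑ t : (ZMod q)ˣ, ‖kl q (m * t) (n * (t⁻¹ : (ZMod q)ˣ))‖ ^ 4 =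
     ∑ z : ZMod q × ZMod q, ∑ t ∈ Finset.univ.filter (fun t => φ t = z), ‖kl q z.1 z.2‖ ^ 4 := by
    rw [← Finset.sum_fiberwise (s := Finset.univ) (g := φ)]
    refine Finset.sum_congr rfl fun z _ => Finset.sum_congr rfl fun t ht => ?_
    simp only [Finset.mem_filter, Finset.mem_univ, true_and] at ht
    rw [← ht]
  rw [h2, ← Fintype.sum_prod_type', Finset.mul_sum]
  refine Finset.sum_le_sum fun z _ => ?_
  rw [Finset.sum_const, nsmul_eq_mul]
  refine mul_le_mul_of_nonneg_right ?_ (by positivity)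
  have h3 : (Finset.univ.filter (fun t => φ t = z)).card ≤
      (Finset.univ.filter fun x : ZMod q => (m : ZMod q) * x = z.1).card := by
    apply Finset.card_le_card_of_injOn (fun t : (ZMod q)ˣ => (t : ZMod q))
    · intro t ht
      simp only [Finset.coe_filter, Finset.mem_univ, true_and, Set.mem_ofPred_eq, φ] at ht ⊢
      rw [← ht]
    · intro a _ b _ h
      exact Units.ext h
  have h4 : (Finset.univ.filter fun x : ZMod q => (m : ZMod q) * x = 0).card ≤ m.natAbs := by
    refine le_trans (Finset.card_le_card ?_) (IsAddCyclic.card_nsmul_eq_zero_le (α := ZMod q) (Int.natAbs_pos.2 hm))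
    intro x hx
    simp only [Finset.mem_filter, Finset.mem_univ, true_and] at hx ⊢
    rw [nsmul_eq_mul]
    rcases Int.natAbs_eq m with h | h
    · rw [h] at hx; simpa using hx
    · rw [h] at hx; simpa using hx
  exact_mod_cast h3.trans ((card_affine_le _ _).trans h4)

lemma kl_bound_aux2 (m : ℤ) (hm : m ≠ 0) (n : ZMod q) :
    (q : ℝ) * ‖kl q m n‖ ^ 16 ≤ (2 * m.natAbs) ^ 4 * 41 ^ 48 * (q : ℝ) ^ 16 := by
  have h1 := kl_bound_aux m hm n
  have hq : (0 : ℝ) < q := by exact_mod_cast NeZero.pos q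
  have h2 : (q : ℝ) ≤ q.totient * q.divisors.card := by
    exact_mod_cast le_totient_mul_tau q (NeZero.ne q)
  have h3 : (q.divisors.card : ℝ) ^ 4 ≤ 41 ^ 16 * q := by
    exact_mod_cast tau_pow_four_le q (NeZero.ne q)
  set τ : ℝ := (q.divisors.card : ℝ)
  set K := ‖kl q m n‖
  have hτ : 0 ≤ τ := by positivity
  have hK : 0 ≤ K := by positivity
  have h4 : q * K ^ 4 ≤ (2 * m.natAbs) * (q : ℝ) ^ 4 * τ ^ 3 := by
    calc q * K ^ 4 ≤ (q.totient * τ) * K ^ 4 := by gcongr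
      _ = τ * (q.totient * K ^ 4) := by ring
      _ ≤ τ * (m.natAbs * (2 * (q : ℝ) ^ 4 * τ ^ 2)) := by gcongr
      _ = _ := by ring
  have h5 : (q * K ^ 4) ^ 4 ≤ (2 * m.natAbs) ^ 4 * (q : ℝ) ^ 16 * (41 ^ 16 * q) ^ 3 := by
    calc (q * K ^ 4) ^ 4 ≤ ((2 * m.natAbs) * (q : ℝ) ^ 4 * τ ^ 3) ^ 4 := by gcongr
      _ = (2 * m.natAbs) ^ 4 * (q : ℝ) ^ 16 * (τ ^ 4) ^ 3 := by ring
      _ ≤ _ := by gcongr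
  have h6 : (q : ℝ) ^ 3 * (q * K ^ 16) ≤ q ^ 3 * ((2 * m.natAbs) ^ 4 * 41 ^ 48 * (q : ℝ) ^ 16) := by
    calc _ = (q * K ^ 4) ^ 4 := by ring
      _ ≤ _ := h5
      _ = _ := by ring
  exact le_of_mul_le_mul_left h6 (by positivity)

end

lemma kl_small_aux (m : ℤ) (hm : m ≠ 0) (ε : ℝ) (hε : 0 < ε) : 
    ∃ N : ℕ, ∀ q ≥ N, ∀ [NeZero q], ∀ n : ZMod q, ‖kl q m n‖ ≤ ε * q := by
  obtain ⟨N, hN⟩ := exists_nat_ge (((2 * m.natAbs) ^ 4 * 41 ^ 48 : ℝ) / ε ^ 16)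
  refine ⟨N, fun q hq _ n => ?_⟩
  have hq0 : (0 : ℝ) < q := by exact_mod_cast NeZero.pos q
  have h := kl_bound_aux2 m hm n
  have hNq : ((2 * m.natAbs) ^ 4 * 41 ^ 48 : ℝ) / ε ^ 16 ≤ q := hN.trans (by exact_mod_cast hq)
  rw [div_le_iff₀ (by positivity)] at hNq
  refine le_of_pow_le_pow_left₀ (n := 16) (by norm_num) (by positivity) ?_
  refine le_of_mul_le_mul_left (a := (q : ℝ)) ?_ hq0
  refine h.trans ?_
  calc _ ≤ q * ε ^ 16 * (q : ℝ) ^ 16 := by gcongr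
    _ = _ := by ring

lemma kl_small (m n : ℤ) (hmn : m ≠ 0 ∨ n ≠ 0) (ε : ℝ) (hε : 0 < ε) : 
    ∃ N : ℕ, ∀ q ≥ N, ∀ [NeZero q], ‖kl q m n‖ ≤ ε * q := by
  rcases hmn with h | h
  · obtain ⟨N, hN⟩ := kl_small_aux m h ε hε
    exact ⟨N, fun q hq _ => hN q hq _⟩
  · obtain ⟨N, hN⟩ := kl_small_aux n h ε hε
    exact ⟨N, fun q hq _ => by rw [kl_symm]; exact hN q hq _⟩


lemma stdAddChar_eq_fourier {q : ℕ} [NeZero q] (m : ℤ) (x : ZMod q) :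
    (ZMod.stdAddChar ((m : ZMod q) * x) : ℂ) = fourier m (ZMod.toAddCircle x) := by
  rw [fourier_apply, ← map_zsmul, zsmul_eq_mul]
  rfl

/-- discrepancy functional -/
noncomputable def Lam (q : ℕ) [NeZero q] (m : ℤ) (w : C(UnitAddCircle, ℂ)) : ℂ :=
  ∑ x : (ZMod q)ˣ, fourier m (ZMod.toAddCircle (x : ZMod q)) *
      w (ZMod.toAddCircle ((x⁻¹ : (ZMod q)ˣ) : ZMod q))
    - (if m = 0 then 1 else 0) * q.totient * ∫ y, w y

lemma int_cont (w : C(UnitAddCircle, ℂ)) : Integrable (fun y => w y) := by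
  exact w.continuous.integrable_of_hasCompactSupport (HasCompactSupport.of_compactSpace _)

lemma Lam_add (q : ℕ) [NeZero q] (m : ℤ) (w v : C(UnitAddCircle, ℂ)) :
    Lam q m (w + v) = Lam q m w + Lam q m v := by
  unfold Lam
  simp only [ContinuousMap.add_apply, mul_add, Finset.sum_add_distrib]
  rw [integral_add (int_cont w) (int_cont v)]
  ring

lemma Lam_smul (q : ℕ) [NeZero q] (m : ℤ) (c : ℂ) (w : C(UnitAddCircle, ℂ)) :
    Lam q m (c • w) = c * Lam q m w := by
  unfold Lam
  simp only [ContinuousMap.smul_apply, smul_eq_mul]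
  rw [integral_const_mul, mul_sub, Finset.mul_sum]
  congr 1
  · exact Finset.sum_congr rfl fun x _ => by ring
  · ring

lemma Lam_norm_le (q : ℕ) [NeZero q] (m : ℤ) (w : C(UnitAddCircle, ℂ)) :
    ‖Lam q m w‖ ≤ 2 * q * ‖w‖ := by
  unfold Lam
  have hφ : (q.totient : ℝ) ≤ q := by exact_mod_cast Nat.totient_le q
  have h1 : ‖∑ x : (ZMod q)ˣ, fourier m (ZMod.toAddCircle (x : ZMod q)) *
      w (ZMod.toAddCircle ((x⁻¹ : (ZMod q)ˣ) : ZMod q))‖ ≤ q.totient * ‖w‖ := by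
    refine (norm_sum_le_of_le (f := fun x : (ZMod q)ˣ => fourier m (ZMod.toAddCircle (x : ZMod q)) *
      w (ZMod.toAddCircle ((x⁻¹ : (ZMod q)ˣ) : ZMod q))) Finset.univ (n := fun _ => ‖w‖) fun x _ => ?_).trans ?_
    · rw [norm_mul, fourier_apply, Circle.norm_coe, one_mul]
      exact w.norm_coe_le_norm _
    · simp [ZMod.card_units_eq_totient]
  have h2 : ‖∫ y, w y‖ ≤ ‖w‖ := by
    refine (norm_integral_le_of_norm_le_const (C := ‖w‖) (ae_of_all _ fun y => w.norm_coe_le_norm _)).trans ?_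
    rw [measureReal_def, UnitAddCircle.measure_univ, ENNReal.toReal_one, mul_one]
  have h3 : ‖(if m = 0 then 1 else 0 : ℂ) * q.totient * ∫ y, w y‖ ≤ q.totient * ‖w‖ := by
    rw [norm_mul, norm_mul]
    have : ‖(if m = 0 then 1 else 0 : ℂ)‖ ≤ 1 := by split_ifs <;> simp
    calc _ ≤ 1 * ‖(q.totient : ℂ)‖ * ‖w‖ := by gcongr
      _ = _ := by simp
  refine (norm_sub_le _ _).trans ((add_le_add h1 h3).trans ?_)
  nlinarith [norm_nonneg w]

lemma integral_fourier_unit (n : ℤ) : ∫ y : UnitAddCircle, fourier n y = if n = 0 then 1 else 0 := by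
  have h := congrFun (fourierCoeff_fourier (T := 1) n) 0
  rw [fourierCoeff, AddCircle.integral_haarAddCircle] at h
  simp only [neg_zero, fourier_zero, one_smul, inv_one] at h
  rw [h]
  by_cases hn : n = 0
  · simp [hn]
  · rw [if_neg hn, Pi.single_eq_of_ne (Ne.symm hn)]

lemma Lam_fourier (q : ℕ) [NeZero q] (m n : ℤ) :
    Lam q m (fourier n) = if m = 0 ∧ n = 0 then 0 else kl q m n := by
  have h : ∑ x : (ZMod q)ˣ, fourier m (ZMod.toAddCircle (x : ZMod q)) *
      fourier n (ZMod.toAddCircle ((x⁻¹ : (ZMod q)ˣ) : ZMod q)) = kl q m n := by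
    unfold kl
    refine Finset.sum_congr rfl fun x _ => ?_
    rw [AddChar.map_add_eq_mul, stdAddChar_eq_fourier, stdAddChar_eq_fourier]
  unfold Lam
  rw [integral_fourier_unit]
  split_ifs with h1 h2 h3 h4 h5
  · rw [h1, h2]
    simp [ZMod.card_units_eq_totient]
  all_goals first | tauto | (rw [h]; simp)

lemma Lam_small (m : ℤ) (w : C(UnitAddCircle, ℂ)) : ∀ ε > 0, ∃ N : ℕ, ∀ q ≥ N, ∀ [NeZero q],
    ‖Lam q m w‖ ≤ ε * q := by
  have hw : w ∈ (Submodule.span ℂ (Set.range (@fourier 1))).topologicalClosure := by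
    rw [span_fourier_closure_eq_top]; trivial
  have hspan : ∀ v ∈ Submodule.span ℂ (Set.range (@fourier 1)), ∀ ε > 0, ∃ N : ℕ, ∀ q ≥ N, ∀ [NeZero q],
      ‖Lam q m v‖ ≤ ε * q := by
    intro v hv
    induction hv using Submodule.span_induction with
    | mem x hx =>
      obtain ⟨n, rfl⟩ := hx
      intro ε hε
      by_cases hmn : m = 0 ∧ n = 0
      · refine ⟨0, fun q _ _ => ?_⟩
        rw [Lam_fourier, if_pos hmn, norm_zero]
        positivity
      · obtain ⟨N, hN⟩ := kl_small m n (by tauto) ε hε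
        refine ⟨N, fun q hq _ => ?_⟩
        rw [Lam_fourier, if_neg hmn]
        exact hN q hq
    | zero =>
      intro ε hε
      refine ⟨0, fun q _ _ => ?_⟩
      have := Lam_norm_le q m 0
      rw [norm_zero, mul_zero] at this
      exact this.trans (by positivity)
    | add x y _ _ hx hy =>
      intro ε hε
      obtain ⟨N1, h1⟩ := hx (ε / 2) (by positivity)
      obtain ⟨N2, h2⟩ := hy (ε / 2) (by positivity)
      refine ⟨max N1 N2, fun q hq _ => ?_⟩
      rw [Lam_add]
      have a1 := h1 q (le_trans (le_max_left _ _) hq)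
      have a2 := h2 q (le_trans (le_max_right _ _) hq)
      refine (norm_add_le _ _).trans ?_
      linarith
    | smul c x _ hx =>
      intro ε hε
      obtain ⟨N, h⟩ := hx (ε / (‖c‖ + 1)) (by positivity)
      refine ⟨N, fun q hq _ => ?_⟩
      rw [Lam_smul, norm_mul]
      have := h q hq
      calc _ ≤ (‖c‖ + 1) * (ε / (‖c‖ + 1) * q) := by gcongr; linarith
        _ = _ := by field_simp
  intro ε hε
  obtain ⟨v, hv, hd⟩ := Metric.mem_closure_iff.1 hw (ε / 4) (by positivity)
  obtain ⟨N, hN⟩ := hspan v hv (ε / 2) (by positivity)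
  refine ⟨N, fun q hq _ => ?_⟩
  have e : Lam q m w = Lam q m v + Lam q m (w - v) := by rw [← Lam_add]; congr 1; abel
  rw [e]
  refine (norm_add_le _ _).trans ?_
  have a1 := hN q hq
  have a2 := Lam_norm_le q m (w - v)
  rw [dist_eq_norm] at hd
  have hq0 : (0 : ℝ) < q := by exact_mod_cast NeZero.pos q
  nlinarith

lemma Lam_small_unif (m : ℤ) (w : ℝ → C(UnitAddCircle, ℂ)) (hw : Continuous w) (R : ℝ) :
    ∀ ε > 0, ∃ N : ℕ, ∀ q ≥ N, ∀ [NeZero q], ∀ s ∈ Set.Icc (-R) R,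
    ‖Lam q m (w s)‖ ≤ ε * q := by
  intro ε hε
  have hK : IsCompact (Set.image w (Set.Icc (-R) R)) := isCompact_Icc.image hw
  obtain ⟨t, ht, htf, hcov⟩ := hK.finite_cover_balls (e := ε / 4) (by positivity)
  choose N hN using fun v : C(UnitAddCircle, ℂ) => Lam_small m v (ε / 2) (by positivity)
  refine ⟨htf.toFinset.sup N, fun q hq _ s hs => ?_⟩
  have := hcov (Set.mem_image_of_mem w hs)
  simp only [Set.mem_iUnion, Metric.mem_ball, exists_prop] at this
  obtain ⟨v, hv, hd⟩ := this
  have e : Lam q m (w s) = Lam q m v + Lam q m (w s - v) := by rw [← Lam_add]; congr 1; abel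
  rw [e]
  refine (norm_add_le _ _).trans ?_
  have a1 := hN v q (le_trans (Finset.le_sup (by simpa using hv)) hq)
  have a2 := Lam_norm_le q m (w s - v)
  rw [dist_eq_norm] at hd
  have hq0 : (0 : ℝ) < q := by exact_mod_cast NeZero.pos q
  nlinarith


/-- the weight -/
noncomputable def wr (r v : ℝ) : ℝ := max 0 (r / max r v + r / max r (1 - v) - 1)

lemma wr_symm (r v : ℝ) : wr r (1 - v) = wr r v := by
  unfold wr
  rw [sub_sub_cancel]
  congr 1
  ring

lemma wr_nonneg (r v : ℝ) : 0 ≤ wr r v := le_max_left _ _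

lemma div_max_le_one {r : ℝ} (hr : 0 < r) (v : ℝ) : r / max r v ≤ 1 :=
  (div_le_one (lt_max_of_lt_left hr)).2 (le_max_left _ _)

lemma wr_le_one {r : ℝ} (hr : 0 < r) (v : ℝ) : wr r v ≤ 1 := by
  unfold wr
  have := div_max_le_one hr v
  have := div_max_le_one hr (1 - v)
  exact max_le zero_le_one (by linarith)

lemma wr_le_two_mul {r : ℝ} (hr : 0 < r) {v : ℝ} (hv : v ≤ 1 / 2) : wr r v ≤ 2 * r := by
  unfold wr
  have h1 := div_max_le_one hr v
  have h2 : r / max r (1 - v) ≤ 2 * r := by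
    rw [div_le_iff₀ (lt_max_of_lt_left hr)]
    have : 1 / 2 ≤ max r (1 - v) := le_max_of_le_right (by linarith)
    nlinarith
  exact max_le (by positivity) (by linarith)

lemma wr_eq_zero {r : ℝ} (hr : 0 < r) {v : ℝ} (hv : v ≤ 1 / 2) (h : 2 * r < v) : wr r v = 0 := by
  unfold wr
  apply max_eq_left
  have h1 : r / max r v ≤ r / v := div_le_div_of_nonneg_left hr.le (by linarith) (le_max_right _ _)
  have h2 : r / max r (1 - v) ≤ r / (1 - v) :=
    div_le_div_of_nonneg_left hr.le (by linarith) (le_max_right _ _)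
  have h3 : r / v + r / (1 - v) ≤ 1 := by
    rw [div_add_div _ _ (by linarith) (by linarith), div_le_one (mul_pos (by linarith) (by linarith))]
    nlinarith
  linarith

lemma norm_coe_unit {u : ℝ} (h0 : 0 ≤ u) (h1 : u ≤ 1) :
    ‖(u : UnitAddCircle)‖ = if u ≤ 1 / 2 then u else 1 - u := by
  split_ifs with h
  · have := (AddCircle.norm_coe_eq_abs_iff (p := 1) one_ne_zero (x := u)).2 (by rw [abs_of_nonneg h0]; simpa using h)
    rw [this, abs_of_nonneg h0]
  · have e : (u : UnitAddCircle) = ((u - 1 : ℝ) : UnitAddCircle) := by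
      rw [AddCircle.coe_sub, AddCircle.coe_period, sub_zero]
    rw [e]
    have := (AddCircle.norm_coe_eq_abs_iff (p := 1) one_ne_zero (x := u - 1)).2 (by
      rw [abs_of_nonpos (by linarith)]; simp; linarith)
    rw [this, abs_of_nonpos (by linarith)]
    ring

lemma wr_norm {u : ℝ} (r : ℝ) (h0 : 0 ≤ u) (h1 : u ≤ 1) : wr r ‖(u : UnitAddCircle)‖ = wr r u := by
  rw [norm_coe_unit h0 h1]
  split_ifs with h
  · rfl
  · exact wr_symm r u

lemma wr_cont : Continuous (fun z : ℝ × ℝ => wr (Real.exp (-2 * z.1)) z.2) := by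
  unfold wr
  refine continuous_const.max ?_
  refine Continuous.sub (Continuous.add ?_ ?_) continuous_const
  · refine Continuous.div (by fun_prop) (by fun_prop) fun z => ?_
    exact (lt_max_of_lt_left (Real.exp_pos _)).ne'
  · refine Continuous.div (by fun_prop) (by fun_prop) fun z => ?_
    exact (lt_max_of_lt_left (Real.exp_pos _)).ne'

/-- weight as a function on the circle -/
noncomputable def wfun (s : ℝ) : C(UnitAddCircle, ℂ) where
  toFun y := (wr (Real.exp (-2 * s)) ‖y‖ : ℂ)
  continuous_toFun := by
    have := wr_cont.comp (f := fun y : UnitAddCircle => (s, ‖y‖)) (by fun_prop)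
    exact Complex.continuous_ofReal.comp this

lemma wfun_cont : Continuous wfun := by
  apply ContinuousMap.continuous_of_continuous_uncurry
  have := wr_cont.comp (f := fun z : ℝ × UnitAddCircle => (z.1, ‖z.2‖)) (by fun_prop)
  exact Complex.continuous_ofReal.comp this

noncomputable def Wint (s : ℝ) : ℝ := ∫ u in (0:ℝ)..1, wr (Real.exp (-2 * s)) u

lemma integral_wfun (s : ℝ) : ∫ y, wfun s y = (Wint s : ℂ) := by
  rw [← UnitAddCircle.intervalIntegral_preimage 0, Wint, ← intervalIntegral.integral_ofReal, zero_add]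
  refine intervalIntegral.integral_congr fun u hu => ?_
  rw [Set.uIcc_of_le zero_le_one] at hu
  simp only [wfun, ContinuousMap.coe_mk]
  rw [wr_norm _ hu.1 hu.2]

lemma Wint_cont : Continuous Wint := by
  unfold Wint
  exact intervalIntegral.continuous_parametric_intervalIntegral_of_continuous' wr_cont 0 1

lemma wr_cont' (s : ℝ) : Continuous (fun u => wr (Real.exp (-2 * s)) u) :=
  wr_cont.comp (f := fun u => (s, u)) (by fun_prop)

lemma Wint_nonneg (s : ℝ) : 0 ≤ Wint s :=
  intervalIntegral.integral_nonneg zero_le_one fun _ _ => wr_nonneg _ _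

lemma Wint_le_one (s : ℝ) : Wint s ≤ 1 := by
  have := intervalIntegral.integral_mono_on (μ := volume) zero_le_one 
    ((wr_cont' s).intervalIntegrable 0 1) ((continuous_const (y := (1:ℝ))).intervalIntegrable (μ := volume) 0 1)
    (fun u _ => wr_le_one (Real.exp_pos (-2 * s)) u)
  simpa [Wint] using this

lemma Wint_half (s : ℝ) : Wint s = 2 * ∫ u in (0:ℝ)..(1/2), wr (Real.exp (-2 * s)) u := by
  have h := intervalIntegral.integral_add_adjacent_intervals (μ := volume)
    ((wr_cont' s).intervalIntegrable 0 (1/2)) ((wr_cont' s).intervalIntegrable (1/2) 1)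
  have h2 : ∫ u in (1/2:ℝ)..1, wr (Real.exp (-2 * s)) u = ∫ u in (0:ℝ)..(1/2), wr (Real.exp (-2 * s)) u := by
    have := intervalIntegral.integral_comp_sub_left (a := 0) (b := 1/2) (fun u => wr (Real.exp (-2 * s)) u) 1
    simp only [wr_symm] at this
    rw [this]
    norm_num
  rw [Wint, ← h, h2]
  ring

lemma Wint_le (s : ℝ) : Wint s ≤ 16 * Real.exp (-4 * s) := by
  set r := Real.exp (-2 * s) with hr
  have hr0 : 0 < r := Real.exp_pos _
  have e4 : Real.exp (-4 * s) = r ^ 2 := by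
    rw [hr, ← Real.exp_nat_mul]; congr 1; push_cast; ring
  by_cases hr4 : 1 / 4 ≤ r
  · refine (Wint_le_one s).trans ?_
    rw [e4]
    nlinarith
  · push Not at hr4
    rw [Wint_half, e4]
    have h := intervalIntegral.integral_add_adjacent_intervals (μ := volume)
      ((wr_cont' s).intervalIntegrable 0 (2 * r)) ((wr_cont' s).intervalIntegrable (2 * r) (1/2))
    have h2 : ∫ u in (2 * r)..(1/2), wr (Real.exp (-2 * s)) u = 0 := by
      rw [intervalIntegral.integral_congr_ae (g := fun _ => 0)]
      · simp
      · refine ae_of_all _ fun u hu => ?_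
        rw [Set.uIoc_of_le (by linarith)] at hu
        exact wr_eq_zero hr0 hu.2 hu.1
    have h3 := intervalIntegral.integral_mono_on (μ := volume) (a := 0) (b := 2 * r) (by positivity)
      ((wr_cont' s).intervalIntegrable 0 (2 * r)) ((continuous_const (y := 2 * r)).intervalIntegrable (μ := volume) 0 (2 * r))
      (fun u hu => wr_le_two_mul hr0 (by linarith [hu.2]))
    rw [intervalIntegral.integral_const] at h3
    rw [← h, h2]
    simp only [smul_eq_mul, sub_zero] at h3
    nlinarith

lemma integral_div_max {r b : ℝ} (hr : 0 < r) (hb : r ≤ b) : 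
    ∫ u in (0:ℝ)..b, r / max r u = r + r * Real.log (b / r) := by
  have hc : Continuous fun u => r / max r u :=
    Continuous.div (by fun_prop) (by fun_prop) fun z => (lt_max_of_lt_left hr).ne'
  rw [← intervalIntegral.integral_add_adjacent_intervals (μ := volume)
    (hc.intervalIntegrable 0 r) (hc.intervalIntegrable r b)]
  congr 1
  · rw [intervalIntegral.integral_congr (g := fun _ => 1)]
    · simp
    · intro u hu
      rw [Set.uIcc_of_le hr.le] at hu
      simp only
      rw [max_eq_left hu.2, div_self hr.ne']
  · rw [intervalIntegral.integral_congr (g := fun u => r * u⁻¹)]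
    · rw [intervalIntegral.integral_const_mul, integral_inv_of_pos hr (by linarith)]
    · intro u hu
      rw [Set.uIcc_of_le hb] at hu
      simp only
      rw [max_eq_right hu.1, div_eq_mul_inv]

lemma etaLog_eq (s : ℝ) : etaLog s = 6 / Real.pi ^ 2 * (Real.exp (2 * s) * Wint s) := by
  set r := Real.exp (-2 * s) with hr
  have hr0 : 0 < r := Real.exp_pos _
  have hre : Real.exp (2 * s) * r = 1 := by rw [hr, ← Real.exp_add]; simp
  have hlog : Real.log r = -2 * s := Real.log_exp _
  have hc : ∀ a : ℝ, Continuous fun u => r / max r (a - u) := fun a =>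
    Continuous.div (by fun_prop) (by fun_prop) fun z => (lt_max_of_lt_left hr0).ne'
  have hc' : Continuous fun u => r / max r u :=
    Continuous.div (by fun_prop) (by fun_prop) fun z => (lt_max_of_lt_left hr0).ne'
  unfold etaLog
  split_ifs with h1 h2
  · -- s ≤ 0
    have hr1 : 1 ≤ r := by rw [hr]; exact Real.one_le_exp (by linarith)
    have : Wint s = 1 := by
      rw [Wint, intervalIntegral.integral_congr (g := fun _ => 1)]
      · simp
      · intro u hu
        rw [Set.uIcc_of_le zero_le_one] at hu
        simp only
        rw [← hr, wr, max_eq_left (by linarith [hu.2] : u ≤ r), max_eq_left (by linarith [hu.1] : 1 - u ≤ r),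
          div_self hr0.ne']
        norm_num
    rw [this, mul_one]
  · push Not at h1
    have hr1 : r ≤ 1 := by rw [hr]; exact Real.exp_le_one_iff.2 (by linarith)
    have hr4 : 1 / 4 ≤ r := by
      have : Real.exp (-2 * Real.log 2) ≤ r := Real.exp_le_exp.2 (by linarith)
      have e : Real.exp (-2 * Real.log 2) = 1 / 4 := by
        rw [show -2 * Real.log 2 = Real.log (1/4) by
          rw [show (1/4:ℝ) = 2⁻¹ ^ 2 by norm_num, Real.log_pow, Real.log_inv]; push_cast; ring]
        exact Real.exp_log (by norm_num)
      linarith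
    have hW : Wint s = 2 * (r + r * Real.log (1 / r)) - 1 := by
      have e1 : Wint s = ∫ u in (0:ℝ)..1, (r / max r u + r / max r (1 - u) - 1) := by
        rw [Wint]
        refine intervalIntegral.integral_congr fun u hu => ?_
        rw [Set.uIcc_of_le zero_le_one] at hu
        rw [← hr, wr, max_eq_right]
        have p1 : 0 ≤ r / max r u := by positivity
        have p2 : 0 ≤ r / max r (1 - u) := by positivity
        by_cases hu1 : u ≤ r
        · rw [max_eq_left hu1, div_self hr0.ne']; linarith
        by_cases hu2 : 1 - u ≤ r
        · rw [max_eq_left hu2, div_self hr0.ne']; linarith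
        push Not at hu1 hu2
        rw [max_eq_right hu1.le, max_eq_right hu2.le, div_add_div _ _ (by linarith) (by linarith), sub_nonneg,
          one_le_div (mul_pos (by linarith) (by linarith))]
        nlinarith [sq_nonneg (u - 1/2)]
      rw [e1, intervalIntegral.integral_sub, intervalIntegral.integral_add]
      · have := intervalIntegral.integral_comp_sub_left (a := 0) (b := 1) (fun u => r / max r u) 1
        rw [this]
        norm_num only
        rw [integral_div_max hr0 hr1]
        simp
        ring
      · exact hc'.intervalIntegrable _ _
      · exact (hc 1).intervalIntegrable _ _
      · exact (hc'.add (hc 1)).intervalIntegrable _ _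
      · exact continuous_const.intervalIntegrable _ _
    rw [hW, one_div, Real.log_inv, hlog]
    congr 1
    linear_combination (-(2 + 4 * s)) * hre
  · push Not at h1 h2
    have hr4 : r < 1 / 4 := by
      have : r < Real.exp (-2 * Real.log 2) := Real.exp_lt_exp.2 (by linarith)
      have e : Real.exp (-2 * Real.log 2) = 1 / 4 := by
        rw [show -2 * Real.log 2 = Real.log (1/4) by
          rw [show (1/4:ℝ) = 2⁻¹ ^ 2 by norm_num, Real.log_pow, Real.log_inv]; push_cast; ring]
        exact Real.exp_log (by norm_num)
      linarith
    set c := Real.sqrt (1 / 4 - r) with hcdef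
    have hcsq : c ^ 2 = 1 / 4 - r := Real.sq_sqrt (by linarith)
    have hc0 : 0 < c := Real.sqrt_pos.2 (by linarith)
    have hc1 : c < 1 / 2 := by nlinarith
    set u0 := 1 / 2 - c with hu0
    have hprod : u0 * (1 - u0) = r := by rw [hu0]; linear_combination -hcsq
    have hu0pos : 0 < u0 := by linarith
    have hru0 : r < u0 := by nlinarith
    have hW : Wint s = 2 * ((r + r * Real.log (u0 / r)) + r * Real.log (1 / (1 - u0)) - u0) := by
      rw [Wint_half]
      congr 1
      rw [← intervalIntegral.integral_add_adjacent_intervals (μ := volume)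
        ((wr_cont' s).intervalIntegrable 0 u0) ((wr_cont' s).intervalIntegrable u0 (1/2))]
      have z : ∫ u in u0..(1/2), wr (Real.exp (-2 * s)) u = 0 := by
        rw [intervalIntegral.integral_congr (g := fun _ => 0)]
        · simp
        · intro u hu
          rw [Set.uIcc_of_le (by linarith)] at hu
          simp only
          rw [← hr, wr, max_eq_left]
          rw [max_eq_right (by linarith [hu.1] : r ≤ u), max_eq_right (by linarith [hu.2] : r ≤ 1 - u),
            div_add_div _ _ (by linarith [hu.1]) (by linarith [hu.2]), sub_nonpos,
            div_le_one (mul_pos (by linarith [hu.1]) (by linarith [hu.2]))]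
          nlinarith [hu.1, hu.2, mul_nonneg (sub_nonneg.2 hu.1) (sub_nonneg.2 hu.2)]
      rw [z, add_zero]
      have e1 : ∫ u in (0:ℝ)..u0, wr (Real.exp (-2 * s)) u = ∫ u in (0:ℝ)..u0, (r / max r u + r / max r (1 - u) - 1) := by
        refine intervalIntegral.integral_congr fun u hu => ?_
        rw [Set.uIcc_of_le hu0pos.le] at hu
        rw [← hr, wr, max_eq_right]
        have p2 : 0 ≤ r / max r (1 - u) := by positivity
        by_cases hu1 : u ≤ r
        · rw [max_eq_left hu1, div_self hr0.ne']; linarith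
        push Not at hu1
        rw [max_eq_right hu1.le, max_eq_right (by linarith [hu.2] : r ≤ 1 - u),
            div_add_div _ _ (by linarith [hu.1]) (by linarith [hu.2]), sub_nonneg,
            one_le_div (mul_pos (by linarith [hu.1]) (by linarith [hu.2]))]
        nlinarith [hu.1, hu.2, mul_nonneg (sub_nonneg.2 hu.2) (by linarith [hu.2] : 0 ≤ 1 - u - u0)]
      rw [e1, intervalIntegral.integral_sub, intervalIntegral.integral_add]
      · have e2 : ∫ u in (0:ℝ)..u0, r / max r (1 - u) = r * Real.log (1 / (1 - u0)) := by
          rw [intervalIntegral.integral_comp_sub_left (fun u => r / max r u) 1,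
            intervalIntegral.integral_congr (g := fun u => r * u⁻¹)]
          · rw [intervalIntegral.integral_const_mul, integral_inv_of_pos (by linarith) (by linarith), sub_zero]
          · intro u hu
            rw [Set.uIcc_of_le (by linarith)] at hu
            simp only
            rw [max_eq_right (by linarith [hu.1] : r ≤ u), div_eq_mul_inv]
        rw [integral_div_max hr0 hru0.le, e2]
        simp
      · exact hc'.intervalIntegrable _ _
      · exact (hc 1).intervalIntegrable _ _
      · exact (hc'.add (hc 1)).intervalIntegrable _ _
      · exact continuous_const.intervalIntegrable _ _
    have hd : u0 / r = 1 / (1 - u0) := by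
      rw [← hprod]
      have : 1 - u0 ≠ 0 := by linarith
      field_simp
    rw [hW, hd, show Real.log (1 / (1 - u0)) = -Real.log (1 / 2 + c) by
      rw [one_div, Real.log_inv, show 1 - u0 = 1 / 2 + c by rw [hu0]; ring]]
    congr 1
    rw [hu0]
    linear_combination (4 * Real.log (1 / 2 + c) - 2) * hre


lemma tsum_moebius : ∑' d : ℕ, (ArithmeticFunction.moebius d : ℝ) / (d : ℝ) ^ 2 = 6 / Real.pi ^ 2 := by
  have h := ArithmeticFunction.LSeries_zeta_mul_Lseries_moebius (s := 2) (by norm_num)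
  rw [ArithmeticFunction.LSeries_zeta_eq_riemannZeta (by norm_num), riemannZeta_two] at h
  have h2 : LSeries (fun n => ((ArithmeticFunction.moebius n : ℤ) : ℂ)) 2 =
      ((∑' d : ℕ, (ArithmeticFunction.moebius d : ℝ) / (d : ℝ) ^ 2 : ℝ) : ℂ) := by
    rw [LSeries, Complex.ofReal_tsum]
    refine tsum_congr fun n => ?_
    rw [LSeries.term_def]
    split_ifs with hn
    · simp [hn]
    · push_cast
      rw [Complex.cpow_ofNat]
  rw [h2] at h
  have hpi : (Real.pi : ℂ) ≠ 0 := by exact_mod_cast Real.pi_ne_zero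
  have h3 : ((∑' d : ℕ, (ArithmeticFunction.moebius d : ℝ) / (d : ℝ) ^ 2 : ℝ) : ℂ) = ((6 / Real.pi ^ 2 : ℝ) : ℂ) := by
    push_cast at h ⊢
    field_simp at h ⊢
    linear_combination h
  exact_mod_cast h3

lemma tsum_eq_range {H : ℝ → ℝ} {T η : ℝ} (hη : 0 < η) (hT : ∀ t ≥ T, H t = 0) (c : ℕ → ℝ) {N : ℕ} (hN : T / η ≤ N) :
    ∑' e : ℕ, c e * H (η * e) = ∑ e ∈ Finset.range N, c e * H (η * e) := by
  refine tsum_eq_sum fun e he => ?_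
  rw [Finset.mem_range, not_lt] at he
  rw [hT, mul_zero]
  have : T / η ≤ e := hN.trans (by exact_mod_cast he)
  rw [div_le_iff₀ hη] at this
  rw [ge_iff_le, mul_comm]
  exact this

lemma riemann_bound {H : ℝ → ℝ} {T η B : ℝ} (hη : 0 < η) (hT0 : 0 < T) (hT : ∀ t ≥ T, H t = 0) (h0 : H 0 = 0)
    (hB : ∀ t ∈ Set.Icc 0 T, |H t| ≤ B) : |∑' e : ℕ, η * H (η * e)| ≤ 2 * T * B := by
  have hB0 : 0 ≤ B := (abs_nonneg _).trans (hB 0 ⟨le_rfl, hT0.le⟩)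
  by_cases h : T ≤ η
  · have : ∀ e : ℕ, η * H (η * e) = 0 := by
      intro e
      rcases Nat.eq_zero_or_pos e with rfl | he
      · simp [h0]
      · have : (1:ℝ) ≤ e := by exact_mod_cast he
        rw [hT, mul_zero]
        nlinarith
    simp only [this, tsum_zero, abs_zero]
    positivity
  · push Not at h
    rw [tsum_eq_range hη hT (fun _ => η) (Nat.le_ceil (T / η))]
    refine (Finset.abs_sum_le_sum_abs _ _).trans ?_
    have : ∀ e ∈ Finset.range ⌈T / η⌉₊, |η * H (η * e)| ≤ η * B := by
      intro e _
      rw [abs_mul, abs_of_pos hη]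
      refine mul_le_mul_of_nonneg_left ?_ hη.le
      by_cases he : η * e ≤ T
      · exact hB _ ⟨by positivity, he⟩
      · rw [hT _ (by linarith), abs_zero]; exact hB0
    refine (Finset.sum_le_card_nsmul _ _ _ this).trans ?_
    rw [Finset.card_range, nsmul_eq_mul]
    have h2 : (⌈T / η⌉₊ : ℝ) < T / η + 1 := Nat.ceil_lt_add_one (by positivity)
    have h3 : (⌈T / η⌉₊ : ℝ) * η ≤ 2 * T := by
      have : (T / η + 1) * η = T + η := by field_simp
      nlinarith
    nlinarith

lemma riemann_tendsto {H : ℝ → ℝ} {T : ℝ} (hH : Continuous H) (hT0 : 0 < T) (hT : ∀ t ≥ T, H t = 0) :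
    Tendsto (fun η : ℝ => ∑' e : ℕ, η * H (η * e)) (nhdsWithin 0 (Set.Ioi 0)) (nhds (∫ t in (0:ℝ)..T, H t)) := by
  rw [Metric.tendsto_nhdsWithin_nhds]
  intro ε hε
  have huc : UniformContinuousOn H (Set.Icc 0 (T + 1)) :=
    isCompact_Icc.uniformContinuousOn_of_continuous hH.continuousOn
  rw [Metric.uniformContinuousOn_iff] at huc
  obtain ⟨δ, hδ, huc⟩ := huc (ε / (2 * (T + 1))) (by positivity)
  refine ⟨min δ 1, by positivity, fun η hη hd => ?_⟩
  have hη0 : 0 < η := hη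
  rw [dist_zero_right, Real.norm_of_nonneg hη0.le] at hd
  have hη1 : η < 1 := lt_of_lt_of_le hd (min_le_right _ _)
  have hηδ : η < δ := lt_of_lt_of_le hd (min_le_left _ _)
  set N := ⌈T / η⌉₊ with hN
  have hN1 : T ≤ N * η := by
    have := Nat.le_ceil (T / η)
    rwa [div_le_iff₀ hη0] at this
  have hN2 : N * η ≤ T + 1 := by
    have h2 : (N : ℝ) < T / η + 1 := Nat.ceil_lt_add_one (by positivity)
    have : (T / η + 1) * η = T + η := by field_simp
    nlinarith
  rw [tsum_eq_range hη0 hT (fun _ => η) (Nat.le_ceil (T / η))]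
  have hHint : ∀ a b : ℝ, IntervalIntegrable H volume a b := fun a b => hH.intervalIntegrable a b
  have e1 : ∫ t in (0:ℝ)..T, H t = ∑ e ∈ Finset.range N, ∫ t in (η * e)..(η * (e + 1 : ℕ)), H t := by
    have h := intervalIntegral.integral_add_adjacent_intervals (hHint 0 T) (hHint T (η * N))
    have h0 : ∫ t in T..(η * N), H t = 0 := by
      rw [intervalIntegral.integral_congr (g := fun _ => 0)]
      · simp
      · intro t ht
        rw [Set.uIcc_of_le (by linarith)] at ht
        exact hT t ht.1
    rw [h0, add_zero] at h
    rw [h]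
    have h2 := intervalIntegral.sum_integral_adjacent_intervals (f := H) (μ := volume) (n := N)
      (a := fun e : ℕ => η * e) (fun k _ => hHint _ _)
    rw [h2]
    simp
  rw [e1, dist_eq_norm, ← Finset.sum_sub_distrib]
  have h1 : ∀ e ∈ Finset.range N, ‖η * H (η * e) - ∫ t in (η * e)..(η * (e + 1 : ℕ)), H t‖ ≤ ε / (2 * (T + 1)) * η := by
    intro e he
    rw [Finset.mem_range] at he
    have he' : ((e : ℝ) + 1) ≤ N := by exact_mod_cast he
    have hlen : η * (e + 1 : ℕ) - η * e = η := by push_cast; ring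
    have : η * H (η * e) = ∫ t in (η * e)..(η * (e + 1 : ℕ)), H (η * e) := by
      rw [intervalIntegral.integral_const, hlen, smul_eq_mul]
    rw [this, ← intervalIntegral.integral_sub (by simp) (hHint _ _)]
    refine (intervalIntegral.norm_integral_le_of_norm_le_const (C := ε / (2 * (T + 1))) fun t ht => ?_).trans ?_
    · rw [Set.uIoc_of_le (by linarith)] at ht
      obtain ⟨ht1, ht2⟩ := ht
      push_cast at ht2
      have p : 0 ≤ η * e := by positivity
      have := huc (η * e) ⟨p, by nlinarith⟩ t ⟨by linarith, by nlinarith⟩ (by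
        rw [Real.dist_eq, abs_sub_comm, abs_of_pos (by linarith)]; linarith)
      rw [Real.dist_eq] at this
      exact this.le
    · rw [hlen, abs_of_pos hη0]
  refine (norm_sum_le_of_le _ h1).trans_lt ?_
  rw [Finset.sum_const, Finset.card_range, nsmul_eq_mul]
  calc (N : ℝ) * (ε / (2 * (T + 1)) * η) = (N * η) * (ε / (2 * (T + 1))) := by ring
    _ ≤ (T + 1) * (ε / (2 * (T + 1))) := by gcongr
    _ = ε / 2 := by field_simp
    _ < ε := by linarith

lemma sum_totient_moebius (g : ℕ → ℝ) (N : ℕ) (hg : ∀ k ≥ N, g k = 0) :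
    ∑ q ∈ Finset.range N, (q.totient : ℝ) * g q =
    ∑ d ∈ Finset.range N, ∑ e ∈ Finset.range N, (ArithmeticFunction.moebius d : ℝ) * e * g (d * e) := by
  have hφ := (ArithmeticFunction.sum_eq_iff_sum_mul_moebius_eq (R := ℝ) (f := fun n => (n.totient : ℝ)) (g := fun n => (n : ℝ))).1
    (fun n _ => by
      have := Nat.sum_totient n
      exact_mod_cast this)
  rw [← Finset.sum_product']
  have e1 : ∑ x ∈ Finset.range N ×ˢ Finset.range N, (ArithmeticFunction.moebius x.1 : ℝ) * x.2 * g (x.1 * x.2) =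
      ∑ x ∈ (Finset.range N ×ˢ Finset.range N).filter (fun x => 0 < x.1 * x.2 ∧ x.1 * x.2 < N),
        (ArithmeticFunction.moebius x.1 : ℝ) * x.2 * g (x.1 * x.2) := by
    symm
    apply Finset.sum_filter_of_ne
    intro x _ hx
    by_contra hcon
    apply hx
    rw [not_and_or] at hcon
    rcases hcon with h | h
    · simp only [not_lt, nonpos_iff_eq_zero, mul_eq_zero] at h
      rcases h with h | h <;> simp [h]
    · rw [hg _ (not_lt.1 h), mul_zero]
  rw [e1, ← Finset.sum_fiberwise_of_maps_to (g := fun x : ℕ × ℕ => x.1 * x.2) (t := Finset.range N)]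
  · refine Finset.sum_congr rfl fun q hq => ?_
    rw [Finset.mem_range] at hq
    rcases Nat.eq_zero_or_pos q with rfl | hq0
    · rw [Nat.totient_zero, Nat.cast_zero, zero_mul]
      symm
      apply Finset.sum_eq_zero
      intro x hx
      simp only [Finset.mem_filter] at hx
      omega
    · rw [← hφ q hq0, Finset.sum_mul]
      refine Finset.sum_congr ?_ ?_
      · ext x
        simp only [Nat.mem_divisorsAntidiagonal, Finset.mem_filter, Finset.mem_product, Finset.mem_range]
        constructor
        · rintro ⟨h1, h2⟩
          have a1 : x.1 ∣ q := ⟨x.2, h1.symm⟩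
          have a2 : x.2 ∣ q := ⟨x.1, by rw [mul_comm]; exact h1.symm⟩
          have := Nat.le_of_dvd hq0 a1
          have := Nat.le_of_dvd hq0 a2
          refine ⟨⟨⟨by omega, by omega⟩, by omega, by omega⟩, h1⟩
        · rintro ⟨_, h1⟩
          exact ⟨h1, by omega⟩
      · intro x hx
        rw [(Finset.mem_filter.1 hx).2]
  · intro x hx
    simp only [Finset.mem_filter] at hx
    exact Finset.mem_range.2 hx.2.2

lemma totient_riemann {G : ℝ → ℝ} {T : ℝ} (hG : Continuous G) (hT0 : 0 < T) (hT : ∀ t ≥ T, G t = 0) :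
    Tendsto (fun ε : ℝ => ∑' q : ℕ, (ε ^ 2 * q.totient) * G (ε * q)) (nhdsWithin 0 (Set.Ioi 0))
      (nhds (6 / Real.pi ^ 2 * ∫ t in (0:ℝ)..T, t * G t)) := by
  set H : ℝ → ℝ := fun t => t * G t with hH
  have hHc : Continuous H := continuous_id.mul hG
  have hHT : ∀ t ≥ T, H t = 0 := fun t ht => by simp [hH, hT t ht]
  have hH0 : H 0 = 0 := by simp [hH]
  obtain ⟨B, hB⟩ := isCompact_Icc.exists_bound_of_continuousOn (s := Set.Icc 0 T) hHc.continuousOn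
  have hB' : ∀ t ∈ Set.Icc 0 T, |H t| ≤ B := hB
  have key : ∀ ε > 0, ∑' q : ℕ, (ε ^ 2 * q.totient) * G (ε * q) = 
      ∑' d : ℕ, (ArithmeticFunction.moebius d : ℝ) / (d : ℝ) ^ 2 * ∑' e : ℕ, (ε * d) * H ((ε * d) * e) := by
    intro ε hε
    set N := ⌈T / ε⌉₊ with hN
    have hNT : T / ε ≤ N := Nat.le_ceil _
    have hz : ∀ k : ℕ, k ≥ N → G (ε * k) = 0 := by
      intro k hk
      apply hT
      have : T / ε ≤ k := hNT.trans (by exact_mod_cast hk)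
      rw [div_le_iff₀ hε] at this
      linarith
    rw [tsum_eq_range hε hT _ hNT]
    have h1 := sum_totient_moebius (fun k => ε ^ 2 * G (ε * k)) N (fun k hk => by rw [hz k hk, mul_zero])
    have h2 : ∑ q ∈ Finset.range N, ε ^ 2 * (q.totient : ℝ) * G (ε * q) = 
        ∑ q ∈ Finset.range N, (q.totient : ℝ) * (ε ^ 2 * G (ε * q)) :=
      Finset.sum_congr rfl fun _ _ => by ring
    rw [h2, h1]
    have hz2 : ∀ d : ℕ, 0 < d → ∀ e : ℕ, e ≥ N → H ((ε * d) * e) = 0 := by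
      intro d hd e he
      have := hz (d * e) (he.trans (Nat.le_mul_of_pos_left _ hd))
      simp only [hH]
      push_cast at this
      rw [← mul_assoc] at this
      rw [this, mul_zero]
    have hz1 : ∀ d : ℕ, d ∉ Finset.range N → (ArithmeticFunction.moebius d : ℝ) / (d : ℝ) ^ 2 * ∑' e : ℕ, (ε * d) * H ((ε * d) * e) = 0 := by
      intro d hd
      rw [Finset.mem_range, not_lt] at hd
      have : ∀ e : ℕ, (ε * d) * H ((ε * d) * e) = 0 := by
        intro e
        rcases Nat.eq_zero_or_pos e with rfl | he
        · simp [hH0]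
        · have := hz (d * e) (hd.trans (Nat.le_mul_of_pos_right _ he))
          simp only [hH]
          push_cast at this
          rw [← mul_assoc] at this
          rw [this, mul_zero, mul_zero]
      simp [this]
    rw [tsum_eq_sum (s := Finset.range N) hz1]
    refine Finset.sum_congr rfl fun d _ => ?_
    rcases Nat.eq_zero_or_pos d with rfl | hd
    · simp
    have hd' : (d : ℝ) ≠ 0 := by exact_mod_cast hd.ne'
    rw [tsum_eq_sum (s := Finset.range N) (fun e he => by
      rw [Finset.mem_range, not_lt] at he
      rw [hz2 d hd e he, mul_zero]), Finset.mul_sum]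
    refine Finset.sum_congr rfl fun e _ => ?_
    simp only [hH]
    push_cast
    rw [← mul_assoc ε]
    field_simp
  have hmu : ∀ d : ℕ, |(ArithmeticFunction.moebius d : ℝ)| ≤ 1 := by
    intro d
    have := ArithmeticFunction.abs_moebius_le_one (n := d)
    exact_mod_cast this
  have hlim : Tendsto (fun ε : ℝ => ∑' d : ℕ, (ArithmeticFunction.moebius d : ℝ) / (d : ℝ) ^ 2 * ∑' e : ℕ, (ε * d) * H ((ε * d) * e))
      (nhdsWithin 0 (Set.Ioi 0)) (nhds (∑' d : ℕ, (ArithmeticFunction.moebius d : ℝ) / (d : ℝ) ^ 2 * ∫ t in (0:ℝ)..T, H t)) := by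
    refine tendsto_tsum_of_dominated_convergence (bound := fun d : ℕ => 1 / (d : ℝ) ^ 2 * (2 * T * B)) ?_ ?_ ?_
    · exact (Real.summable_one_div_nat_pow.2 (by norm_num)).mul_right _
    · intro d
      rcases Nat.eq_zero_or_pos d with rfl | hd
      · simp
      have hd' : (0 : ℝ) < d := by exact_mod_cast hd
      refine Tendsto.const_mul _ ?_
      refine (riemann_tendsto hHc hT0 hHT).comp ?_
      refine tendsto_nhdsWithin_iff.2 ⟨?_, ?_⟩
      · have : Tendsto (fun ε : ℝ => ε * d) (nhds 0) (nhds (0 * d)) := (continuous_id.mul continuous_const).tendsto 0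
        rw [zero_mul] at this
        exact this.mono_left nhdsWithin_le_nhds
      · filter_upwards [self_mem_nhdsWithin] with ε hε
        exact mul_pos hε hd'
    · filter_upwards [self_mem_nhdsWithin] with ε hε d
      rcases Nat.eq_zero_or_pos d with rfl | hd
      · simp
      have hd' : (0 : ℝ) < d := by exact_mod_cast hd
      rw [norm_mul]
      refine mul_le_mul ?_ (riemann_bound (mul_pos hε hd') hT0 hHT hH0 hB') (norm_nonneg _) (by positivity)
      rw [norm_div, Real.norm_eq_abs, norm_pow, Real.norm_of_nonneg hd'.le]
      gcongr
      exact hmu d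
  rw [tsum_mul_right, tsum_moebius] at hlim
  refine hlim.congr' ?_
  filter_upwards [self_mem_nhdsWithin] with ε hε
  exact (key ε hε).symm


def near (δ : ℝ) (q : ℕ) (y : ℝ) : Prop := ∃ p : ℤ, y - δ / 2 < (p : ℝ) / q ∧ (p : ℝ) / q < y + δ / 2

lemma near_exists {δ : ℝ} (hδ : 0 < δ) (y : ℝ) : ∃ q : ℕ, 0 < q ∧ near δ q y := by
  obtain ⟨r, h1, h2⟩ := exists_rat_btwn (show y - δ / 2 < y + δ / 2 by linarith)
  refine ⟨r.den, r.den_pos, r.num, ?_⟩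
  have : ((r.num : ℝ) / (r.den : ℝ)) = (r : ℝ) := by exact_mod_cast (Rat.num_div_den r)
  rw [this]
  exact ⟨h1, h2⟩

lemma qmin_spec {δ : ℝ} (hδ : 0 < δ) (y : ℝ) : 0 < qmin y δ ∧ near δ (qmin y δ) y :=
  Nat.sInf_mem (s := {q : ℕ | 0 < q ∧ near δ q y}) (near_exists hδ y)

lemma qmin_le {δ y : ℝ} {q : ℕ} (hq : 0 < q) (h : near δ q y) : qmin y δ ≤ q :=
  Nat.sInf_le (s := {q : ℕ | 0 < q ∧ near δ q y}) ⟨hq, h⟩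

lemma qmin_eq_iff {δ : ℝ} (hδ : 0 < δ) (y : ℝ) (q : ℕ) :
    qmin y δ = q ↔ (0 < q ∧ near δ q y) ∧ ∀ b, 0 < b → b < q → ¬ near δ b y := by
  constructor
  · rintro rfl
    refine ⟨qmin_spec hδ y, fun b hb hbq hn => ?_⟩
    have := qmin_le hb hn
    omega
  · rintro ⟨⟨h0, h1⟩, h2⟩
    have h3 := qmin_le h0 h1
    obtain ⟨h4, h5⟩ := qmin_spec hδ y
    by_contra hne
    exact h2 _ h4 (by omega) h5

lemma near_open (δ : ℝ) (q : ℕ) : IsOpen {y | near δ q y} := by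
  have : {y | near δ q y} = ⋃ p : ℤ, Set.Ioo ((p : ℝ) / q - δ / 2) ((p : ℝ) / q + δ / 2) := by
    ext y
    simp only [near, Set.mem_ofPred_eq, Set.mem_iUnion, Set.mem_Ioo]
    refine exists_congr fun p => ?_
    constructor <;> rintro ⟨h1, h2⟩ <;> constructor <;> linarith
  rw [this]
  exact isOpen_iUnion fun _ => isOpen_Ioo

lemma qmin_meas {δ : ℝ} (hδ : 0 < δ) : Measurable (fun y => qmin y δ) := by
  refine measurable_to_countable' fun q => ?_
  have : (fun y => qmin y δ) ⁻¹' {q} = {y | (0 < q ∧ near δ q y) ∧ ∀ b, 0 < b → b < q → ¬ near δ b y} := by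
    ext y
    simp only [Set.mem_preimage, Set.mem_singleton_iff, Set.mem_ofPred_eq]
    exact qmin_eq_iff hδ y q
  rw [this]
  have hn : ∀ b, Measurable (fun y => near δ b y) := fun b => 
    measurableSet_setOfPred.1 (near_open δ b).measurableSet
  apply measurableSet_setOfPred.2
  refine Measurable.and (Measurable.and measurable_const (hn q)) (Measurable.forall fun b => ?_)
  refine Measurable.imp measurable_const (Measurable.imp measurable_const (hn b).not)

/-- no fraction of smaller denominator: characterization by Farey neighbours -/
lemma farey_char {p q q1 p1 : ℤ} (hp : 0 < q) (hq1 : 0 < q1) (hq1q : q1 < q)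
    (hdet : p * q1 - p1 * q = 1) {δ y : ℝ} 
    (hy1 : (p : ℝ) / q - δ / 2 < y) (hy2 : y < (p : ℝ) / q + δ / 2) :
    (∀ a b : ℤ, 0 < b → b < q → ¬ (y - δ / 2 < (a : ℝ) / b ∧ (a : ℝ) / b < y + δ / 2)) ↔
    ((p1 : ℝ) / q1 + δ / 2 ≤ y ∧ y ≤ ((p - p1 : ℤ) : ℝ) / (q - q1 : ℤ) - δ / 2) := by
  have hqR : (0 : ℝ) < q := by exact_mod_cast hp
  have hq1R : (0 : ℝ) < q1 := by exact_mod_cast hq1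
  have hq2 : 0 < q - q1 := by omega
  have hq2R : (0 : ℝ) < ((q - q1 : ℤ) : ℝ) := by exact_mod_cast hq2
  constructor
  · intro h
    constructor
    · have := h p1 q1 hq1 hq1q
      by_contra hc
      apply this
      refine ⟨by linarith, ?_⟩
      have : (p1 : ℝ) / q1 < p / q := by
        rw [div_lt_div_iff₀ hq1R hqR]
        exact_mod_cast (by linarith : p1 * q < p * q1)
      linarith
    · have := h (p - p1) (q - q1) hq2 (by omega)
      by_contra hc
      apply this
      refine ⟨?_, by linarith⟩
      have : (p : ℝ) / q < ((p - p1 : ℤ) : ℝ) / (q - q1 : ℤ) := by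
        rw [div_lt_div_iff₀ hqR hq2R]
        exact_mod_cast (by linarith : p * (q - q1) < (p - p1) * q)
      linarith
  · rintro ⟨h1, h2⟩ a b hb hbq ⟨h3, h4⟩
    have hbR : (0 : ℝ) < b := by exact_mod_cast hb
    have h5 : (p1 : ℝ) / q1 < a / b := by linarith
    have h6 : (a : ℝ) / b < ((p - p1 : ℤ) : ℝ) / (q - q1 : ℤ) := by linarith
    rw [div_lt_div_iff₀ hq1R hbR] at h5
    rw [div_lt_div_iff₀ hbR hq2R] at h6
    have h7 : p1 * b < a * q1 := by exact_mod_cast h5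
    have h8 : a * (q - q1) < (p - p1) * b := by exact_mod_cast h6
    have h9 : b = q1 * ((p - p1) * b - a * (q - q1)) + (q - q1) * (a * q1 - p1 * b) := by
      linear_combination -b * hdet
    have h10 : 1 ≤ a * q1 - p1 * b := by omega
    have h11 : 1 ≤ (p - p1) * b - a * (q - q1) := by omega
    nlinarith

lemma vol_inter {c δ L M : ℝ} :
    volume.real (Set.Ioo (c - δ / 2) (c + δ / 2) ∩ Set.Icc (c - L + δ / 2) (c + M - δ / 2)) =
      max 0 (min δ L + min δ M - δ) := by
  set A := max (c - δ / 2) (c - L + δ / 2) with hA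
  set B := min (c + δ / 2) (c + M - δ / 2) with hB
  have h1 : Set.Ioo A B ⊆ Set.Ioo (c - δ / 2) (c + δ / 2) ∩ Set.Icc (c - L + δ / 2) (c + M - δ / 2) := by
    rintro y ⟨h1, h2⟩
    rw [hA, max_lt_iff] at h1
    rw [hB, lt_min_iff] at h2
    exact ⟨⟨h1.1, h2.1⟩, h1.2.le, h2.2.le⟩
  have h2 : Set.Ioo (c - δ / 2) (c + δ / 2) ∩ Set.Icc (c - L + δ / 2) (c + M - δ / 2) ⊆ Set.Icc A B := by
    rintro y ⟨⟨h1, h2⟩, h3, h4⟩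
    exact ⟨max_le h1.le h3, le_min h2.le h4⟩
  have h3 := measureReal_mono (μ := volume) h1 (by
    refine ((measure_mono Set.inter_subset_left).trans_lt ?_).ne
    simp)
  have h4 := measureReal_mono (μ := volume) h2 (by simp)
  rw [Real.volume_real_Ioo] at h3
  rw [Real.volume_real_Icc] at h4
  have h5 : max 0 (min δ L + min δ M - δ) = max (B - A) 0 := by
    rw [max_comm, hA, hB]
    congr 1
    rcases le_total δ L with h | h <;> rcases le_total δ M with h' | h'
    all_goals
      simp only [min_eq_left h, min_eq_right h, min_eq_left h', min_eq_right h']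
      rcases max_cases (c - δ / 2) (c - L + δ / 2) with ⟨e, _⟩ | ⟨e, _⟩ <;>
      rcases min_cases (c + δ / 2) (c + M - δ / 2) with ⟨f, _⟩ | ⟨f, _⟩ <;>
      rw [e, f] <;> linarith
  rw [h5]
  exact le_antisymm h4 h3

lemma delta_wr {δ : ℝ} (hδ : 0 < δ) {q k : ℕ} (hk : 0 < k) (hkq : k < q) :
    max 0 (min δ (1 / ((q : ℝ) * k)) + min δ (1 / ((q : ℝ) * (q - k))) - δ) =
      δ * wr (1 / ((q : ℝ) ^ 2 * δ)) ((k : ℝ) / q) := by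
  have hk' : (0 : ℝ) < k := by exact_mod_cast hk
  have hq' : (0 : ℝ) < q := by exact_mod_cast (hk.trans hkq)
  have hkq' : (0 : ℝ) < q - k := by
    have : (k : ℝ) < q := by exact_mod_cast hkq
    linarith
  have key : ∀ r v : ℝ, 0 < r → 0 < v → δ * (r / max r v) = min δ (δ * r / v) := by
    intro r v hr hv
    rcases le_total r v with h | h
    · rw [max_eq_right h, min_eq_right, mul_div_assoc]
      rw [div_le_iff₀ hv]
      gcongr
    · rw [max_eq_left h, min_eq_left, div_self hr.ne', mul_one]
      rw [le_div_iff₀ hv]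
      gcongr
  unfold wr
  rw [mul_max_of_nonneg _ _ hδ.le, mul_zero, mul_sub δ _ 1, mul_add δ, mul_one,
    key _ _ (by positivity) (by positivity), key _ _ (by positivity) ?_]
  · congr 4
    · field_simp
    · have : 1 - (k : ℝ) / q = (q - k) / q := by field_simp
      rw [this]
      field_simp
  · rw [sub_pos, div_lt_one hq']
    linarith


/-- the set of points whose smallest denominator is `q` and is attained at `x/q` -/
def piece (δ : ℝ) (q : ℕ) (x : (ZMod q)ˣ) : Set ℝ :=
  Set.Ioo (((x : ZMod q).val : ℝ) / q - δ / 2) (((x : ZMod q).val : ℝ) / q + δ / 2) ∩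
  Set.Icc (((x : ZMod q).val : ℝ) / q - 1 / ((q : ℝ) * (((x⁻¹ : (ZMod q)ˣ) : ZMod q).val : ℝ)) + δ / 2)
    (((x : ZMod q).val : ℝ) / q + 1 / ((q : ℝ) * (q - (((x⁻¹ : (ZMod q)ˣ) : ZMod q).val : ℝ))) - δ / 2)

lemma unit_val_pos {q : ℕ} (hq : 2 ≤ q) (x : (ZMod q)ˣ) : 0 < (x : ZMod q).val ∧ (x : ZMod q).val < q := by
  have : NeZero q := ⟨by omega⟩
  have : Fact (1 < q) := ⟨by omega⟩
  refine ⟨?_, ZMod.val_lt _⟩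
  rw [Nat.pos_iff_ne_zero, Ne, ZMod.val_eq_zero]
  exact x.ne_zero

lemma unit_det {q : ℕ} (hq : 2 ≤ q) (x : (ZMod q)ˣ) :
    ∃ p1 : ℤ, ((x : ZMod q).val : ℤ) * (((x⁻¹ : (ZMod q)ˣ) : ZMod q).val : ℤ) - p1 * q = 1 := by
  have : NeZero q := ⟨by omega⟩
  have h : (((((x : ZMod q).val : ℤ) * (((x⁻¹ : (ZMod q)ˣ) : ZMod q).val : ℤ) - 1 : ℤ)) : ZMod q) = 0 := by
    push_cast
    simp only [ZMod.natCast_val, ZMod.cast_id', id_eq, Units.mul_inv, sub_self]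
  rw [ZMod.intCast_zmod_eq_zero_iff_dvd] at h
  obtain ⟨c, hc⟩ := h
  exact ⟨c, by linarith⟩

lemma piece_data {q : ℕ} (hq : 2 ≤ q) (x : (ZMod q)ˣ) {p1 : ℤ}
    (h : ((x : ZMod q).val : ℤ) * (((x⁻¹ : (ZMod q)ˣ) : ZMod q).val : ℤ) - p1 * q = 1) :
    ((x : ZMod q).val : ℝ) / q - 1 / ((q : ℝ) * (((x⁻¹ : (ZMod q)ˣ) : ZMod q).val : ℝ)) =
      (p1 : ℝ) / (((x⁻¹ : (ZMod q)ˣ) : ZMod q).val : ℤ) ∧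
    ((x : ZMod q).val : ℝ) / q + 1 / ((q : ℝ) * (q - (((x⁻¹ : (ZMod q)ˣ) : ZMod q).val : ℝ))) =
      ((((x : ZMod q).val : ℤ) - p1 : ℤ) : ℝ) / (((q : ℤ) - (((x⁻¹ : (ZMod q)ˣ) : ZMod q).val : ℤ) : ℤ) : ℝ) := by
  obtain ⟨h1, h2⟩ := unit_val_pos hq x⁻¹
  obtain ⟨h3, h4⟩ := unit_val_pos hq x
  set p := (x : ZMod q).val
  set k := ((x⁻¹ : (ZMod q)ˣ) : ZMod q).val
  have hR : (p : ℝ) * k - p1 * q = 1 := by exact_mod_cast h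
  have hk : (0 : ℝ) < k := by exact_mod_cast h1
  have hkq : (0 : ℝ) < q - k := by
    have : (k : ℝ) < q := by exact_mod_cast h2
    linarith
  have hqq : (0 : ℝ) < q := by positivity
  push_cast
  constructor
  · rw [div_sub_div _ _ hqq.ne' (by positivity), div_eq_div_iff (by positivity) (by positivity)]
    linear_combination (q * k : ℝ) * hR
  · rw [div_add_div _ _ hqq.ne' (by positivity), div_eq_div_iff (by positivity) (by positivity)]
    linear_combination -(q * (q - k) : ℝ) * hR

lemma mem_piece_iff {δ : ℝ} {q : ℕ} (hq : 2 ≤ q) (x : (ZMod q)ˣ) (y : ℝ) :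
    y ∈ piece δ q x ↔ (y - δ / 2 < ((x : ZMod q).val : ℝ) / q ∧ ((x : ZMod q).val : ℝ) / q < y + δ / 2) ∧
      ∀ b, 0 < b → b < q → ¬ near δ b y := by
  obtain ⟨p1, hp1⟩ := unit_det hq x
  obtain ⟨e1, e2⟩ := piece_data hq x hp1
  obtain ⟨h1, h2⟩ := unit_val_pos hq x⁻¹
  unfold piece
  rw [e1, e2, Set.mem_inter_iff, Set.mem_Ioo, Set.mem_Icc]
  have : (((x : ZMod q).val : ℝ) / q - δ / 2 < y ∧ y < ((x : ZMod q).val : ℝ) / q + δ / 2) ↔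
    (y - δ / 2 < ((x : ZMod q).val : ℝ) / q ∧ ((x : ZMod q).val : ℝ) / q < y + δ / 2) := by
    constructor <;> rintro ⟨h1, h2⟩ <;> constructor <;> linarith
  rw [← this]
  refine and_congr_right fun hy => ?_
  rw [← farey_char (p := ((x : ZMod q).val : ℤ)) (q := (q : ℤ)) (by omega) (by omega) (by omega) hp1 (by simpa only [Int.cast_natCast] using hy.1) (by simpa only [Int.cast_natCast] using hy.2)]
  constructor
  · rintro h b hb hbq ⟨a, ha⟩
    exact h a b (by omega) (by omega) (by exact_mod_cast ha)
  · rintro h a b hb hbq ha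
    lift b to ℕ using hb.le
    exact h b (by omega) (by omega) ⟨a, by exact_mod_cast ha⟩

lemma piece_subset {δ : ℝ} (hδ : 0 < δ) {q : ℕ} (hq : 2 ≤ q) (x : (ZMod q)ˣ) : piece δ q x ⊆ Set.Ioc 0 1 := by
  rintro y hy
  obtain ⟨p1, hp1⟩ := unit_det hq x
  obtain ⟨e1, e2⟩ := piece_data hq x hp1
  obtain ⟨h1, h2⟩ := unit_val_pos hq x⁻¹
  obtain ⟨h3, h4⟩ := unit_val_pos hq x
  unfold piece at hy
  rw [e1, e2, Set.mem_inter_iff, Set.mem_Ioo, Set.mem_Icc] at hy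
  obtain ⟨_, h5, h6⟩ := hy
  set p := (x : ZMod q).val
  set k := ((x⁻¹ : (ZMod q)ˣ) : ZMod q).val
  have hp : 0 ≤ p1 := by
    by_contra hc
    have : p1 ≤ -1 := by omega
    have : (0 : ℤ) ≤ (p : ℤ) * k := by positivity
    nlinarith
  have hp2 : (p : ℤ) - p1 ≤ q - k := by
    by_contra hc
    have h7 : (q : ℤ) - k + 1 ≤ p - p1 := by omega
    have h8 : ((p : ℤ) - p1) * q = 1 + p * (q - k) := by linear_combination hp1
    have h9 : ((q : ℤ) - k + 1) * q ≤ (p - p1) * q := by gcongr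
    have h10 : (p : ℤ) * (q - k) ≤ (q - 1) * (q - k) := by gcongr <;> omega
    nlinarith
  constructor
  · have : (0 : ℝ) ≤ (p1 : ℝ) / ((k : ℕ) : ℤ) := by positivity
    linarith
  · have : (((p : ℤ) - p1 : ℤ) : ℝ) / (((q : ℤ) - k : ℤ) : ℝ) ≤ 1 := by
      rw [div_le_one (by exact_mod_cast (by omega : (0:ℤ) < (q : ℤ) - k))]
      exact_mod_cast hp2
    linarith

lemma piece_meas {δ : ℝ} {q : ℕ} (x : (ZMod q)ˣ) : MeasurableSet (piece δ q x) :=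
  measurableSet_Ioo.inter measurableSet_Icc

lemma piece_vol {δ : ℝ} (hδ : 0 < δ) {q : ℕ} (hq : 2 ≤ q) (x : (ZMod q)ˣ) : 
    volume.real (piece δ q x) = δ * wr (1 / ((q : ℝ) ^ 2 * δ)) ((((x⁻¹ : (ZMod q)ˣ) : ZMod q).val : ℝ) / q) := by
  obtain ⟨h1, h2⟩ := unit_val_pos hq x⁻¹
  rw [← delta_wr hδ h1 h2, ← vol_inter]
  rfl

def lev (δ : ℝ) (q : ℕ) : Set ℝ := {y | y ∈ Set.Ioc (0:ℝ) 1 ∧ qmin y δ = q}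

lemma lev_meas {δ : ℝ} (hδ : 0 < δ) (q : ℕ) : MeasurableSet (lev δ q) :=
  measurableSet_Ioc.inter (qmin_meas hδ (measurableSet_singleton q))

lemma lev_eq {δ : ℝ} (hδ : 0 < δ) {q : ℕ} (hq : 2 ≤ q) : lev δ q = ⋃ x : (ZMod q)ˣ, piece δ q x := by
  have hqR : (0 : ℝ) < q := by positivity
  ext y
  simp only [lev, Set.mem_ofPred_eq, Set.mem_iUnion, mem_piece_iff hq, qmin_eq_iff hδ]
  constructor
  · rintro ⟨⟨hy0, hy1⟩, ⟨_, p, hp1, hp2⟩, hn⟩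
    have n1 := hn 1 one_pos (by omega)
    have hp0 : 0 < p := by
      by_contra hc
      apply n1
      have : (p : ℝ) / q ≤ 0 := div_nonpos_of_nonpos_of_nonneg (by exact_mod_cast (not_lt.1 hc)) hqR.le
      refine ⟨0, ?_, ?_⟩ <;> simp <;> linarith
    have hpq : p < q := by
      by_contra hc
      apply n1
      have : 1 ≤ (p : ℝ) / q := by
        rw [le_div_iff₀ hqR, one_mul]
        exact_mod_cast (not_lt.1 hc)
      refine ⟨1, ?_, ?_⟩ <;> simp <;> linarith
    lift p to ℕ using hp0.le
    have hpq' : p < q := by exact_mod_cast hpq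
    have hp0' : 0 < p := by exact_mod_cast hp0
    have hcop : p.Coprime q := by
      by_contra hc
      have hg : 0 < p.gcd q := Nat.gcd_pos_of_pos_left _ hp0'
      have hg2 : 2 ≤ p.gcd q := by
        have : p.gcd q ≠ 1 := hc
        omega
      obtain ⟨u, hu⟩ := Nat.gcd_dvd_left p q
      obtain ⟨v, hv⟩ := Nat.gcd_dvd_right p q
      have hv0 : 0 < v := by
        rcases Nat.eq_zero_or_pos v with h | h
        · rw [h, mul_zero] at hv
          omega
        · exact h
      refine hn v hv0 (by nlinarith) ⟨u, ?_⟩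
      have : ((u : ℤ) : ℝ) / v = ((p : ℤ) : ℝ) / q := by
        have hu' : (p : ℝ) = (p.gcd q : ℝ) * u := by exact_mod_cast hu
        have hv' : (q : ℝ) = (p.gcd q : ℝ) * v := by exact_mod_cast hv
        have : (0 : ℝ) < p.gcd q := by exact_mod_cast hg
        push_cast
        conv_rhs => rw [hu', hv']
        rw [mul_div_mul_left _ _ this.ne']
      rw [this]
      exact ⟨hp1, hp2⟩
    refine ⟨ZMod.unitOfCoprime p hcop, ?_, hn⟩
    rw [ZMod.coe_unitOfCoprime, ZMod.val_natCast_of_lt hpq']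
    simpa only [Int.cast_natCast] using And.intro hp1 hp2
  · rintro ⟨x, h1, h2⟩
    refine ⟨piece_subset hδ hq x ((mem_piece_iff hq x y).2 ⟨h1, h2⟩), ⟨by omega, ((x : ZMod q).val : ℤ), ?_⟩, h2⟩
    simpa only [Int.cast_natCast] using h1

lemma piece_disj {δ : ℝ} {q : ℕ} (hq : 2 ≤ q) :
    Pairwise (fun x x' : (ZMod q)ˣ => Disjoint (piece δ q x) (piece δ q x')) := by
  have : NeZero q := ⟨by omega⟩
  have hqR : (0 : ℝ) < q := by positivity
  have key : ∀ x x' : (ZMod q)ˣ, (x : ZMod q).val < (x' : ZMod q).val → Disjoint (piece δ q x) (piece δ q x') := by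
    intro x x' h
    rw [Set.disjoint_left]
    rintro y ⟨_, _, h1⟩ ⟨⟨h2, _⟩, _⟩
    obtain ⟨h3, h4⟩ := unit_val_pos hq x⁻¹
    set k := ((x⁻¹ : (ZMod q)ˣ) : ZMod q).val
    have hkq : (1 : ℝ) ≤ q - k := by
      have : (k : ℝ) + 1 ≤ q := by exact_mod_cast h4
      linarith
    have h5 : 1 / ((q : ℝ) * (q - k)) ≤ 1 / q := by
      apply one_div_le_one_div_of_le hqR
      nlinarith
    have h6 : ((x : ZMod q).val : ℝ) / q + 1 / q ≤ ((x' : ZMod q).val : ℝ) / q := by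
      rw [← add_div]
      gcongr
      exact_mod_cast h
    linarith
  intro x x' hne
  rcases lt_trichotomy (x : ZMod q).val (x' : ZMod q).val with h | h | h
  · exact key x x' h
  · exact absurd (Units.ext (ZMod.val_injective q h)) hne
  · exact (key x' x h).symm


lemma exp_sq {δ : ℝ} (hδ : 0 < δ) {q : ℕ} (hq : 0 < q) :
    Real.exp (-2 * (Real.log q + 1 / 2 * Real.log δ)) = 1 / ((q : ℝ) ^ 2 * δ) := by
  have hqR : (0 : ℝ) < q := by exact_mod_cast hq
  have : -2 * (Real.log q + 1 / 2 * Real.log δ) = - Real.log ((q : ℝ) ^ 2 * δ) := by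
    rw [Real.log_mul (by positivity) hδ.ne', Real.log_pow]
    push_cast
    ring
  rw [this, Real.exp_neg, Real.exp_log (by positivity), one_div]

lemma wfun_unit {δ : ℝ} (hδ : 0 < δ) {q : ℕ} (hq : 2 ≤ q) [NeZero q] (x : (ZMod q)ˣ) :
    (δ : ℂ) * wfun (Real.log q + 1 / 2 * Real.log δ) (ZMod.toAddCircle ((x⁻¹ : (ZMod q)ˣ) : ZMod q)) =
      (volume.real (piece δ q x) : ℂ) := by
  obtain ⟨h1, h2⟩ := unit_val_pos hq x⁻¹
  have hqR : (0 : ℝ) < q := by positivity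
  rw [piece_vol hδ hq, Complex.ofReal_mul]
  congr 1
  change ((wr (Real.exp (-2 * (Real.log q + 1 / 2 * Real.log δ))) ‖ZMod.toAddCircle ((x⁻¹ : (ZMod q)ˣ) : ZMod q)‖ : ℝ) : ℂ) = _
  rw [exp_sq hδ (by omega), ZMod.toAddCircle_apply, wr_norm _ (by positivity)]
  rw [div_le_one hqR]
  exact_mod_cast h2.le

lemma piece_vol_le {δ : ℝ} (hδ : 0 < δ) {q : ℕ} (hq : 2 ≤ q) (x : (ZMod q)ˣ) : 
    volume.real (piece δ q x) ≤ δ := by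
  rw [piece_vol hδ hq]
  have : (0 : ℝ) < q := by positivity
  have := wr_le_one (r := 1 / ((q : ℝ) ^ 2 * δ)) (by positivity) ((((x⁻¹ : (ZMod q)ˣ) : ZMod q).val : ℝ) / q)
  nlinarith

lemma piece_fin {δ : ℝ} {q : ℕ} (x : (ZMod q)ˣ) : volume (piece δ q x) ≠ ⊤ := by
  refine ((measure_mono Set.inter_subset_left).trans_lt ?_).ne
  simp

lemma lev_vol {δ : ℝ} (hδ : 0 < δ) {q : ℕ} (hq : 2 ≤ q) [NeZero q] :
    volume.real (lev δ q) = ∑ x : (ZMod q)ˣ, volume.real (piece δ q x) := by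
  rw [lev_eq hδ hq, measureReal_iUnion_fintype (piece_disj hq) (fun x => piece_meas x) (fun x => piece_fin x)]

lemma lev_vol_le {δ : ℝ} (hδ : 0 < δ) {q : ℕ} (hq : 2 ≤ q) : volume.real (lev δ q) ≤ q * δ := by
  have : NeZero q := ⟨by omega⟩
  rw [lev_vol hδ hq]
  refine (Finset.sum_le_sum fun x _ => piece_vol_le hδ hq x).trans ?_
  rw [Finset.sum_const, nsmul_eq_mul, Finset.card_univ, ZMod.card_units_eq_totient]
  gcongr
  exact Nat.totient_le q

lemma lev_one_vol_le {δ : ℝ} (hδ : 0 < δ) (hδ1 : δ ≤ 1) : volume.real (lev δ 1) ≤ δ := by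
  have h1 : lev δ 1 ⊆ Set.Ioc 0 (δ / 2) ∪ Set.Ioc (1 - δ / 2) 1 := by
    rintro y ⟨⟨hy0, hy1⟩, hy⟩
    rw [qmin_eq_iff hδ] at hy
    obtain ⟨⟨_, p, h1, h2⟩, _⟩ := hy
    rw [Nat.cast_one, div_one] at h1 h2
    have a1 : (-1 : ℝ) < p := by linarith
    have a2 : (p : ℝ) < 2 := by linarith
    have b1 : (-1 : ℤ) < p := by exact_mod_cast a1
    have b2 : p < (2 : ℤ) := by exact_mod_cast a2
    have : p = 0 ∨ p = 1 := by omega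
    rcases this with rfl | rfl
    · left
      push_cast at h1
      exact ⟨hy0, by linarith⟩
    · right
      push_cast at h2
      exact ⟨by linarith, hy1⟩
  refine (measureReal_mono h1 ?_).trans ((measureReal_union_le _ _).trans ?_)
  · refine ((measure_union_le _ _).trans_lt ?_).ne
    simp
  · rw [Real.volume_real_Ioc_of_le (by linarith), Real.volume_real_Ioc_of_le (by linarith)]
    linarith

lemma lev_vol_le' {δ : ℝ} (hδ : 0 < δ) (hδ1 : δ ≤ 1) {q : ℕ} (hq : 1 ≤ q) : volume.real (lev δ q) ≤ q * δ := by
  rcases hq.eq_or_lt with rfl | h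
  · simpa using lev_one_vol_le hδ hδ1
  · exact lev_vol_le hδ h

lemma count_le (q : ℕ) {r : ℝ} (hr : 0 < r) :
    ∑ k ∈ Finset.Ioo 0 q, (if (k : ℝ) ≤ 2 * r * q then 2 * r else 0) ≤ 4 * r ^ 2 * q := by
  rw [← Finset.sum_filter, Finset.sum_const, nsmul_eq_mul]
  have h1 : (Finset.Ioo 0 q).filter (fun k : ℕ => (k : ℝ) ≤ 2 * r * q) ⊆ Finset.Ioc 0 ⌊2 * r * q⌋₊ := by
    intro k hk
    simp only [Finset.mem_filter, Finset.mem_Ioo] at hk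
    exact Finset.mem_Ioc.2 ⟨hk.1.1, Nat.le_floor hk.2⟩
  have h2 := Finset.card_le_card h1
  rw [Nat.card_Ioc, Nat.sub_zero] at h2
  have h3 : ((((Finset.Ioo 0 q).filter (fun k : ℕ => (k : ℝ) ≤ 2 * r * q)).card : ℕ) : ℝ) ≤ 2 * r * q :=
    (Nat.cast_le.2 h2).trans (Nat.floor_le (by positivity))
  nlinarith

lemma sum_wr_le {q : ℕ} (hq : 2 ≤ q) {r : ℝ} (hr : 0 < r) :
    ∑ k ∈ Finset.Ioo 0 q, wr r ((k : ℝ) / q) ≤ 8 * r ^ 2 * q := by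
  have hqR : (0 : ℝ) < q := by positivity
  have hA : ∀ v : ℝ, v ≤ 1 / 2 → wr r v ≤ (if v * q ≤ 2 * r * q then 2 * r else 0) := by
    intro v hv
    split_ifs with h
    · exact wr_le_two_mul hr hv
    · rw [wr_eq_zero hr hv]
      by_contra hc
      apply h
      have := not_lt.1 hc
      gcongr
  have h1 : ∀ k ∈ Finset.Ioo 0 q, wr r ((k : ℝ) / q) ≤ (if (k : ℝ) ≤ 2 * r * q then 2 * r else 0) +
      (if ((q - k : ℕ) : ℝ) ≤ 2 * r * q then 2 * r else 0) := by
    intro k hk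
    rw [Finset.mem_Ioo] at hk
    have p1 : 0 ≤ (if (k : ℝ) ≤ 2 * r * q then 2 * r else 0) := by split_ifs <;> positivity
    have p2 : 0 ≤ (if ((q - k : ℕ) : ℝ) ≤ 2 * r * q then 2 * r else 0) := by split_ifs <;> positivity
    rcases le_total ((k : ℝ) / q) (1 / 2) with h | h
    · have := hA _ h
      rw [div_mul_cancel₀ _ hqR.ne'] at this
      linarith
    · have := hA (1 - (k : ℝ) / q) (by linarith)
      rw [wr_symm] at this
      have e : (1 - (k : ℝ) / q) * q = ((q - k : ℕ) : ℝ) := by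
        rw [Nat.cast_sub hk.2.le]
        field_simp
      rw [e] at this
      linarith
  refine (Finset.sum_le_sum h1).trans ?_
  rw [Finset.sum_add_distrib]
  have h2 : ∑ k ∈ Finset.Ioo 0 q, (if ((q - k : ℕ) : ℝ) ≤ 2 * r * q then 2 * r else 0) =
      ∑ k ∈ Finset.Ioo 0 q, (if (k : ℝ) ≤ 2 * r * q then 2 * r else 0) := by
    refine Finset.sum_nbij' (fun k => q - k) (fun k => q - k) ?_ ?_ ?_ ?_ ?_
    · intro k hk; simp only [Finset.mem_Ioo] at hk ⊢; omega
    · intro k hk; simp only [Finset.mem_Ioo] at hk ⊢; omega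
    · intro k hk; simp only [Finset.mem_Ioo] at hk ⊢; omega
    · intro k hk; simp only [Finset.mem_Ioo] at hk ⊢; omega
    · intro k hk; rfl
  rw [h2]
  have := count_le q hr
  linarith

lemma lev_vol_tail {δ : ℝ} (hδ : 0 < δ) {q : ℕ} (hq : 2 ≤ q) : volume.real (lev δ q) ≤ 8 / (δ * q ^ 3) := by
  have : NeZero q := ⟨by omega⟩
  have hqR : (0 : ℝ) < q := by positivity
  rw [lev_vol hδ hq]
  set r := 1 / ((q : ℝ) ^ 2 * δ) with hr
  have hr0 : 0 < r := by positivity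
  have h1 : ∑ x : (ZMod q)ˣ, volume.real (piece δ q x) = δ * ∑ x : (ZMod q)ˣ, wr r (((x : ZMod q).val : ℝ) / q) := by
    rw [Finset.mul_sum, ← Equiv.sum_comp (Equiv.inv (ZMod q)ˣ)]
    refine Finset.sum_congr rfl fun x _ => ?_
    rw [piece_vol hδ hq]
    simp [hr]
  have h2 : ∑ x : (ZMod q)ˣ, wr r (((x : ZMod q).val : ℝ) / q) ≤ ∑ k ∈ Finset.Ioo 0 q, wr r ((k : ℝ) / q) := by
    rw [← Finset.sum_image (s := Finset.univ) (g := fun x : (ZMod q)ˣ => (x : ZMod q).val) (f := fun k : ℕ => wr r ((k : ℝ) / q))]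
    · refine Finset.sum_le_sum_of_subset_of_nonneg ?_ fun _ _ _ => wr_nonneg _ _
      intro k hk
      obtain ⟨x, _, rfl⟩ := Finset.mem_image.1 hk
      exact Finset.mem_Ioo.2 (unit_val_pos hq x)
    · intro x _ x' _ h
      exact Units.ext (ZMod.val_injective q h)
  rw [h1]
  calc _ ≤ δ * (8 * r ^ 2 * q) := by
        gcongr
        exact h2.trans (sum_wr_le hq hr0)
    _ = 8 / (δ * q ^ 3) := by
        rw [hr]
        field_simp

lemma lev_integral {δ : ℝ} (hδ : 0 < δ) {q : ℕ} (hq : 2 ≤ q) [NeZero q] {f : ℝ → ℂ} (hf : Continuous f)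
    {K : ℝ} (hK : ∀ x y, ‖f x - f y‖ ≤ K * |x - y|) :
    ‖(∫ y in lev δ q, f y) - δ * ∑ x : (ZMod q)ˣ, f (((x : ZMod q).val : ℝ) / q) * 
      wfun (Real.log q + 1 / 2 * Real.log δ) (ZMod.toAddCircle ((x⁻¹ : (ZMod q)ˣ) : ZMod q))‖ ≤ q * (K * δ ^ 2) := by
  have hK0 : 0 ≤ K := by
    have := (norm_nonneg _).trans (hK 1 0)
    simpa using this
  have hi : ∀ x : (ZMod q)ˣ, IntegrableOn f (piece δ q x) := fun x =>
    (hf.integrableOn_Icc (a := 0) (b := 1)).mono_set ((piece_subset hδ hq x).trans Set.Ioc_subset_Icc_self)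
  rw [lev_eq hδ hq, integral_iUnion_fintype (fun x => piece_meas x) (piece_disj hq) hi, Finset.mul_sum,
    ← Finset.sum_sub_distrib]
  have h1 : ∀ x ∈ (Finset.univ : Finset (ZMod q)ˣ), ‖(∫ y in piece δ q x, f y) - δ * (f (((x : ZMod q).val : ℝ) / q) * 
      wfun (Real.log q + 1 / 2 * Real.log δ) (ZMod.toAddCircle ((x⁻¹ : (ZMod q)ˣ) : ZMod q)))‖ ≤ K * δ ^ 2 := by
    intro x _
    set c := ((x : ZMod q).val : ℝ) / q with hc
    have e : (δ : ℂ) * (f c * 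
      wfun (Real.log q + 1 / 2 * Real.log δ) (ZMod.toAddCircle ((x⁻¹ : (ZMod q)ˣ) : ZMod q))) = ∫ y in piece δ q x, f c := by
      rw [setIntegral_const, ← Complex.coe_smul, smul_eq_mul, ← wfun_unit hδ hq]
      ring
    rw [e, ← integral_sub (hi x) (integrableOn_const (piece_fin x))]
    refine (norm_setIntegral_le_of_norm_le_const (C := K * δ) (piece_fin x).lt_top fun y hy => ?_).trans ?_
    · refine (hK _ _).trans ?_
      gcongr
      obtain ⟨⟨h1, h2⟩, _⟩ := hy
      rw [abs_le]
      constructor <;> linarith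
    · have := piece_vol_le hδ hq x
      calc K * δ * volume.real (piece δ q x) ≤ K * δ * δ := by gcongr
        _ = _ := by ring
  refine (norm_sum_le_of_le _ h1).trans ?_
  rw [Finset.sum_const, nsmul_eq_mul, Finset.card_univ, ZMod.card_units_eq_totient]
  gcongr
  exact Nat.totient_le q


lemma qmin_bdd {δ : ℝ} (hδ : 0 < δ) : ∃ N : ℕ, ∀ y, qmin y δ ≤ N := by
  obtain ⟨N, hN⟩ := exists_nat_gt (1 / δ)
  have hN0 : (0 : ℝ) < N := lt_trans (by positivity) hN
  refine ⟨N, fun y => qmin_le (by exact_mod_cast hN0) ⟨⌈N * (y + δ / 2)⌉ - 1, ?_, ?_⟩⟩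
  · rw [lt_div_iff₀ hN0]
    push_cast
    have := Int.le_ceil (N * (y + δ / 2))
    rw [div_lt_iff₀ hδ] at hN
    nlinarith
  · rw [div_lt_iff₀ hN0]
    push_cast
    have := Int.ceil_lt_add_one (N * (y + δ / 2))
    nlinarith

lemma integral_decomp {δ : ℝ} (hδ : 0 < δ) {N : ℕ} (hN : ∀ y, qmin y δ ≤ N) {f : ℝ → ℂ}
    (hf : IntegrableOn f (Set.Ioc 0 1)) (g : ℕ → ℂ) :
    ∫ y in Set.Ioc (0:ℝ) 1, f y * g (qmin y δ) = ∑ q ∈ Finset.Icc 1 N, g q * ∫ y in lev δ q, f y := by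
  have h1 : Set.Ioc (0:ℝ) 1 = ⋃ q ∈ Finset.Icc 1 N, lev δ q := by
    ext y
    simp only [Set.mem_iUnion, lev, Set.mem_ofPred_eq, Finset.mem_Icc]
    constructor
    · intro h
      exact ⟨_, ⟨(qmin_spec hδ y).1, hN y⟩, h, rfl⟩
    · rintro ⟨q, _, h, _⟩
      exact h
  have e : ∀ q, ∫ y in lev δ q, f y * g (qmin y δ) = g q * ∫ y in lev δ q, f y := by
    intro q
    rw [← integral_const_mul]
    refine setIntegral_congr_fun (lev_meas hδ q) fun y hy => ?_
    simp only [hy.2]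
    ring
  have hi : ∀ q, IntegrableOn (fun y => f y * g (qmin y δ)) (lev δ q) := by
    intro q
    have : IntegrableOn (fun y => f y * g q) (lev δ q) := by
      apply Integrable.mul_const
      exact hf.mono_set fun y hy => hy.1
    refine this.congr_fun (fun y hy => ?_) (lev_meas hδ q)
    simp only [hy.2]
  rw [h1, integral_biUnion_finset _ (fun q _ => lev_meas hδ q) _ (fun q _ => hi q)]
  · exact Finset.sum_congr rfl fun q _ => e q
  · intro q _ q' _ hne
    change Disjoint _ _
    rw [Set.disjoint_left]
    rintro y ⟨_, h1⟩ ⟨_, h2⟩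
    exact hne (h1.symm.trans h2)

lemma fourier_lip (m : ℤ) : ∃ K : ℝ, ∀ x y : ℝ,
    ‖fourier m (x : UnitAddCircle) - fourier m (y : UnitAddCircle)‖ ≤ K * |x - y| := by
  refine ⟨‖2 * Real.pi * Complex.I * m / (1:ℝ)‖, fun x y => ?_⟩
  have := Convex.norm_image_sub_le_of_norm_hasDerivWithin_le (𝕜 := ℝ) (s := Set.univ)
    (f := fun x : ℝ => fourier m (x : UnitAddCircle)) 
    (f' := fun x : ℝ => 2 * Real.pi * Complex.I * m / (1:ℝ) * fourier m (x : UnitAddCircle))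
    (C := ‖2 * Real.pi * Complex.I * m / (1:ℝ)‖) (x := y) (y := x)
    (fun x _ => (hasDerivAt_fourier (1:ℝ) m x).hasDerivWithinAt) (fun x _ => by
      rw [norm_mul]
      have : ‖fourier m (x : UnitAddCircle)‖ = 1 := by rw [fourier_apply]; exact Circle.norm_coe _
      rw [this, mul_one]) convex_univ trivial trivial
  exact this

lemma G_integral {F : ℝ → ℝ} (hF : Continuous F) {R : ℝ} (hR : 0 < R) (hFR : ∀ s, R ≤ |s| → F s = 0) :
    Continuous (fun t => F (Real.log (max t (Real.exp (-R)))) * Wint (Real.log (max t (Real.exp (-R))))) ∧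
    6 / Real.pi ^ 2 * ∫ t in (0:ℝ)..(Real.exp R), t * (F (Real.log (max t (Real.exp (-R)))) * Wint (Real.log (max t (Real.exp (-R))))) =
      ∫ s, F s * etaLog s := by
  set G : ℝ → ℝ := fun t => F (Real.log (max t (Real.exp (-R)))) * Wint (Real.log (max t (Real.exp (-R)))) with hG
  have hl : Continuous (fun t => Real.log (max t (Real.exp (-R)))) := 
    Continuous.log (by fun_prop) fun t => (lt_of_lt_of_le (Real.exp_pos _) (le_max_right _ _)).ne'
  have hGc : Continuous G := (hF.comp hl).mul (Wint_cont.comp hl)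
  refine ⟨hGc, ?_⟩
  have hH : Continuous (fun t => t * G t) := continuous_id.mul hGc
  change 6 / Real.pi ^ 2 * ∫ t in (0:ℝ)..(Real.exp R), t * G t = _
  rw [← intervalIntegral.integral_add_adjacent_intervals (b := Real.exp (-R)) (hH.intervalIntegrable _ _) (hH.intervalIntegrable _ _)]
  have h1 : ∫ t in (0:ℝ)..(Real.exp (-R)), t * G t = 0 := by
    rw [intervalIntegral.integral_congr (g := fun _ => 0)]
    · simp
    · intro t ht
      rw [Set.uIcc_of_le (Real.exp_pos _).le] at ht
      simp only [hG, max_eq_right ht.2, Real.log_exp]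
      rw [hFR (-R) (by rw [abs_neg, abs_of_pos hR])]
      simp
  have h2 : ∫ t in (Real.exp (-R))..(Real.exp R), t * G t = ∫ s in (-R)..R, F s * (Real.exp (2 * s) * Wint s) := by
    rw [← intervalIntegral.integral_comp_mul_deriv (f := Real.exp) (f' := Real.exp) (g := fun t => t * G t)
      (fun x _ => Real.hasDerivAt_exp x) Real.continuous_exp.continuousOn hH]
    refine intervalIntegral.integral_congr fun s hs => ?_
    rw [Set.uIcc_of_le (by linarith)] at hs
    have : max (Real.exp s) (Real.exp (-R)) = Real.exp s := max_eq_left (Real.exp_le_exp.2 hs.1)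
    simp only [Function.comp, hG, this, Real.log_exp, two_mul, Real.exp_add]
    ring
  have h3 : ∫ s in (-R)..R, F s * (Real.exp (2 * s) * Wint s) = ∫ s, F s * (Real.exp (2 * s) * Wint s) := by
    apply intervalIntegral.integral_eq_integral_of_support_subset
    intro s hs
    by_contra hc
    apply hs
    rcases lt_or_ge |s| R with h | h
    · rw [abs_lt] at h
      exact absurd ⟨h.1, h.2.le⟩ hc
    · simp [hFR s h]
  rw [h1, h2, h3, zero_add, ← integral_const_mul]
  refine integral_congr_ae (Eventually.of_forall fun s => ?_)
  simp only [etaLog_eq]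
  ring

lemma cs_fourier {F : ℝ → ℝ} (hF : Continuous F) {R : ℝ} (hR : 0 < R) (hFR : ∀ s, R ≤ |s| → F s = 0) (m : ℤ) :
    Tendsto (fun δ : ℝ => ∫ y in Set.Ioc (0:ℝ) 1, fourier m (y : UnitAddCircle) * 
        (F (Real.log (qmin y δ) + (1 / 2) * Real.log δ) : ℂ)) (nhdsWithin 0 (Set.Ioi 0))
      (nhds ((if m = 0 then 1 else 0) * ((∫ s, F s * etaLog s : ℝ) : ℂ))) := by
  obtain ⟨hGc, hGi⟩ := G_integral hF hR hFR
  set G : ℝ → ℝ := fun t => F (Real.log (max t (Real.exp (-R)))) * Wint (Real.log (max t (Real.exp (-R)))) with hG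
  have hGT : ∀ t ≥ Real.exp R, G t = 0 := by
    intro t ht
    have h1 : R ≤ Real.log (max t (Real.exp (-R))) := by
      rw [Real.le_log_iff_exp_le (lt_of_lt_of_le (Real.exp_pos _) (le_max_right _ _))]
      exact ht.trans (le_max_left _ _)
    simp only [hG]
    rw [hFR _ (h1.trans (le_abs_self _)), zero_mul]
  have hsq : Tendsto Real.sqrt (nhdsWithin 0 (Set.Ioi 0)) (nhdsWithin 0 (Set.Ioi 0)) := by
    rw [tendsto_nhdsWithin_iff]
    constructor
    · have := Real.continuous_sqrt.tendsto 0
      rw [Real.sqrt_zero] at this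
      exact this.mono_left nhdsWithin_le_nhds
    · filter_upwards [self_mem_nhdsWithin] with δ hδ
      exact Real.sqrt_pos.2 hδ
  have hmain := (totient_riemann hGc (Real.exp_pos R) hGT).comp hsq
  rw [hGi] at hmain
  have hmain2 : Tendsto (fun δ : ℝ => (if m = 0 then (1:ℂ) else 0) * 
      (((fun ε : ℝ => ∑' q : ℕ, (ε ^ 2 * q.totient) * G (ε * q)) ∘ Real.sqrt) δ : ℂ)) (nhdsWithin 0 (Set.Ioi 0))
      (nhds ((if m = 0 then 1 else 0) * ((∫ s, F s * etaLog s : ℝ) : ℂ))) :=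
    ((Complex.continuous_ofReal.tendsto _).comp hmain).const_mul _
  refine hmain2.congr_dist ?_
  clear hmain hmain2
  obtain ⟨B, hB⟩ : ∃ B, ∀ s, |F s| ≤ B := by
    obtain ⟨B, hB⟩ := isCompact_Icc.exists_bound_of_continuousOn (s := Set.Icc (-R) R) hF.continuousOn
    refine ⟨max B 0, fun s => ?_⟩
    rcases lt_or_ge |s| R with h | h
    · rw [abs_lt] at h
      exact (hB s ⟨h.1.le, h.2.le⟩).trans (le_max_left _ _)
    · rw [hFR s h, abs_zero]
      exact le_max_right _ _
  have hB0 : 0 ≤ B := (abs_nonneg _).trans (hB 0)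
  obtain ⟨K, hK⟩ := fourier_lip m
  have hK0 : 0 ≤ K := by
    have := (norm_nonneg _).trans (hK 1 0)
    simpa using this
  rw [Metric.tendsto_nhds]
  intro ε hε
  set ε1 := ε / (2 * (B + 1) * Real.exp R ^ 2) with hε1
  have hε10 : 0 < ε1 := by positivity
  obtain ⟨N0, hN0⟩ := Lam_small_unif m wfun wfun_cont R ε1 hε10
  have ev1 : ∀ᶠ δ : ℝ in nhdsWithin 0 (Set.Ioi 0), Real.sqrt δ * (N0 + 2) < Real.exp (-R) := by
    have h1 : Tendsto (fun δ : ℝ => Real.sqrt δ * (N0 + 2)) (nhdsWithin 0 (Set.Ioi 0)) (nhds (0 * (N0 + 2))) :=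
      (tendsto_nhdsWithin_iff.1 hsq).1.mul_const _
    rw [zero_mul] at h1
    exact h1.eventually (gt_mem_nhds (Real.exp_pos _))
  have ev2 : ∀ᶠ δ : ℝ in nhdsWithin 0 (Set.Ioi 0), (K + 1) * δ < ε1 := by
    have h1 : Tendsto (fun δ : ℝ => (K + 1) * δ) (nhdsWithin 0 (Set.Ioi 0)) (nhds ((K + 1) * 0)) :=
      (tendsto_id.mono_left nhdsWithin_le_nhds).const_mul _
    rw [mul_zero] at h1
    exact h1.eventually (gt_mem_nhds hε10)
  filter_upwards [self_mem_nhdsWithin, ev1, ev2] with δ hδ hd1 hd2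
  replace hδ : 0 < δ := hδ
  have hsδ : 0 < Real.sqrt δ := Real.sqrt_pos.2 hδ
  rw [Real.dist_eq, sub_zero, abs_of_nonneg dist_nonneg]
  obtain ⟨N1, hN1⟩ := qmin_bdd hδ
  set N := max N1 ⌈Real.exp R / Real.sqrt δ⌉₊ with hN
  have hN1' : ∀ y, qmin y δ ≤ N := fun y => (hN1 y).trans (le_max_left _ _)
  have hN2 : Real.exp R / Real.sqrt δ ≤ (N + 1 : ℕ) := by
    refine (Nat.le_ceil _).trans ?_
    exact_mod_cast (le_max_right _ _).trans (Nat.le_succ N)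
  set S : ℕ → ℝ := fun q => Real.log q + (1 / 2) * Real.log δ with hS
  have hSexp : ∀ q : ℕ, 1 ≤ q → S q = Real.log (Real.sqrt δ * q) := by
    intro q hq
    rw [Real.log_mul hsδ.ne' (by positivity), Real.log_sqrt hδ.le]
    simp only [hS]
    ring
  have hSrange : ∀ q : ℕ, 1 ≤ q → |S q| < R → Real.exp (-R) < Real.sqrt δ * q ∧ Real.sqrt δ * q < Real.exp R := by
    intro q hq h
    have hp : 0 < Real.sqrt δ * q := by positivity
    rw [hSexp q hq, abs_lt] at h
    exact ⟨(Real.lt_log_iff_exp_lt hp).1 h.1, (Real.log_lt_iff_lt_exp hp).1 h.2⟩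
  have hGS : ∀ q : ℕ, 1 ≤ q → G (Real.sqrt δ * q) = F (S q) * Wint (S q) := by
    intro q hq
    have hp : 0 < Real.sqrt δ * q := by positivity
    simp only [hG]
    rcases le_total (Real.exp (-R)) (Real.sqrt δ * q) with h | h
    · rw [max_eq_left h, hSexp q hq]
    · rw [max_eq_right h, Real.log_exp, hFR (-R) (by rw [abs_neg, abs_of_pos hR])]
      have : S q ≤ -R := by
        rw [hSexp q hq]
        exact (Real.log_le_iff_le_exp hp).2 h
      rw [hFR (S q) (by rw [le_abs]; right; linarith)]
      simp
  -- rewrite main term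
  have e1 : ((if m = 0 then (1:ℂ) else 0) * 
      (((fun ε : ℝ => ∑' q : ℕ, (ε ^ 2 * q.totient) * G (ε * q)) ∘ Real.sqrt) δ : ℂ)) =
      ∑ q ∈ Finset.Icc 1 N, (F (S q) : ℂ) * (δ * ((if m = 0 then 1 else 0) * q.totient * (Wint (S q) : ℂ))) := by
    simp only [Function.comp]
    rw [tsum_eq_range hsδ hGT _ hN2, Finset.range_eq_Ico, Finset.sum_eq_sum_Ico_succ_bot (by omega)]
    rw [Nat.totient_zero, Real.sq_sqrt hδ.le]
    have : Finset.Ico (0 + 1) (N + 1) = Finset.Icc 1 N := by ext; simp only [Finset.mem_Ico, Finset.mem_Icc]; omega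
    rw [this]
    push_cast
    rw [mul_zero, zero_mul, zero_add, Finset.mul_sum]
    refine Finset.sum_congr rfl fun q hq => ?_
    rw [hGS q (Finset.mem_Icc.1 hq).1]
    push_cast
    ring
  have hfc : Continuous (fun y : ℝ => fourier m (y : UnitAddCircle)) :=
    (fourier m).continuous.comp (AddCircle.continuous_mk' 1)
  have e2 := integral_decomp hδ hN1' (f := fun y : ℝ => fourier m (y : UnitAddCircle))
    ((hfc.integrableOn_Icc (a := 0) (b := 1)).mono_set Set.Ioc_subset_Icc_self) (fun q => (F (S q) : ℂ))
  rw [e1, dist_comm, dist_eq_norm]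
  change ‖(∫ y in Set.Ioc (0:ℝ) 1, fourier m (y : UnitAddCircle) * (F (S (qmin y δ)) : ℂ)) - _‖ < ε
  rw [e2, ← Finset.sum_sub_distrib]
  set M := ⌊Real.exp R / Real.sqrt δ⌋₊ with hM
  have hbd : ∀ q ∈ Finset.Icc 1 N, ‖(F (S q) : ℂ) * (∫ y in lev δ q, fourier m (y : UnitAddCircle)) - 
      (F (S q) : ℂ) * (δ * ((if m = 0 then 1 else 0) * q.totient * (Wint (S q) : ℂ)))‖ ≤ 
      if q ∈ Finset.Icc 1 M then B * (Real.exp R * (Real.sqrt δ * (K * δ + ε1))) else 0 := by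
    intro q hq
    have hq1 := (Finset.mem_Icc.1 hq).1
    rw [← mul_sub, norm_mul, Complex.norm_real, Real.norm_eq_abs]
    rcases lt_or_ge |S q| R with h | h
    · obtain ⟨h1, h2⟩ := hSrange q hq1 h
      have hqN : (N0 : ℝ) + 2 < q := by nlinarith
      have hqN' : N0 + 2 < q := by exact_mod_cast hqN
      have : NeZero q := ⟨by omega⟩
      have hmem : q ∈ Finset.Icc 1 M := by
        refine Finset.mem_Icc.2 ⟨hq1, Nat.le_floor ?_⟩
        rw [le_div_iff₀ hsδ]
        linarith
      rw [if_pos hmem]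
      have h3 := lev_integral hδ (q := q) (by omega) hfc hK
      have h4 := hN0 q (by omega) (S q) ⟨(abs_lt.1 h).1.le, (abs_lt.1 h).2.le⟩
      unfold Lam at h4
      rw [integral_wfun] at h4
      have h5 : ‖(∫ y in lev δ q, fourier m (y : UnitAddCircle)) - (δ * ((if m = 0 then 1 else 0) * q.totient * (Wint (S q) : ℂ)))‖
          ≤ q * (K * δ ^ 2) + δ * (ε1 * q) := by
        have e : (∫ y in lev δ q, fourier m (y : UnitAddCircle)) - (δ * ((if m = 0 then 1 else 0) * q.totient * (Wint (S q) : ℂ))) =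
          ((∫ y in lev δ q, fourier m (y : UnitAddCircle)) - δ * ∑ x : (ZMod q)ˣ, fourier m ((((x : ZMod q).val : ℝ) / q : ℝ) : UnitAddCircle) * 
            wfun (S q) (ZMod.toAddCircle ((x⁻¹ : (ZMod q)ˣ) : ZMod q))) + 
          δ * ((∑ x : (ZMod q)ˣ, fourier m (ZMod.toAddCircle (x : ZMod q)) * wfun (S q) (ZMod.toAddCircle ((x⁻¹ : (ZMod q)ˣ) : ZMod q)))
            - ((if m = 0 then 1 else 0) * q.totient * (Wint (S q) : ℂ))) := by
          simp only [ZMod.toAddCircle_apply]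
          ring
        rw [e]
        refine (norm_add_le _ _).trans (add_le_add h3 ?_)
        rw [norm_mul, Complex.norm_real, Real.norm_of_nonneg hδ.le]
        gcongr
      have h6 : q * (K * δ ^ 2) + δ * (ε1 * q) ≤ Real.exp R * (Real.sqrt δ * (K * δ + ε1)) := by
        have e : q * (K * δ ^ 2) + δ * (ε1 * q) = (Real.sqrt δ * q) * (Real.sqrt δ * (K * δ + ε1)) := by
          have := Real.sq_sqrt hδ.le
          linear_combination -(q * (K * δ + ε1)) * this
        rw [e]
        gcongr
      exact mul_le_mul (hB _) (h5.trans h6) (norm_nonneg _) hB0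
    · rw [hFR _ h, abs_zero, zero_mul]
      split_ifs <;> positivity
  refine (norm_sum_le_of_le _ hbd).trans_lt ?_
  rw [← Finset.sum_filter, Finset.sum_const, nsmul_eq_mul]
  have hcard : ((((Finset.Icc 1 N).filter (fun q => q ∈ Finset.Icc 1 M)).card : ℕ) : ℝ) ≤ Real.exp R / Real.sqrt δ := by
    have h1 : ((Finset.Icc 1 N).filter (fun q => q ∈ Finset.Icc 1 M)).card ≤ (Finset.Icc 1 M).card := by
      apply Finset.card_le_card
      intro q hq
      exact (Finset.mem_filter.1 hq).2
    rw [Nat.card_Icc, Nat.add_sub_cancel] at h1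
    exact (Nat.cast_le.2 h1).trans (Nat.floor_le (by positivity))
  calc _ ≤ Real.exp R / Real.sqrt δ * (B * (Real.exp R * (Real.sqrt δ * (K * δ + ε1)))) := by gcongr
    _ = B * Real.exp R ^ 2 * (K * δ + ε1) := by field_simp
    _ ≤ (B + 1) * Real.exp R ^ 2 * (K * δ + ε1) := by gcongr; linarith
    _ < (B + 1) * Real.exp R ^ 2 * (ε1 + ε1) := by gcongr; nlinarith
    _ = ε := by rw [hε1]; field_simp; ring


/-- equidistribution of `f` against the family `Φ` -/
def Peq (Φ : ℝ → ℝ → ℂ) (c : ℂ) (f : ℝ → ℂ) : Prop :=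
  Tendsto (fun δ : ℝ => ∫ y in Set.Ioc (0:ℝ) 1, f y * Φ δ y) (nhdsWithin 0 (Set.Ioi 0))
    (nhds ((∫ y in Set.Ioc (0:ℝ) 1, f y) * c))

lemma Peq_int {Φ : ℝ → ℝ → ℂ} (hm : ∀ δ > 0, Measurable (Φ δ)) {B : ℝ} (hB : ∀ δ y, ‖Φ δ y‖ ≤ B) {f : ℝ → ℂ}
    (hf : IntegrableOn f (Set.Ioc 0 1)) {δ : ℝ} (hδ : 0 < δ) : 
    IntegrableOn (fun y => f y * Φ δ y) (Set.Ioc 0 1) :=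
  Integrable.mul_bdd hf (hm δ hδ).aestronglyMeasurable (Eventually.of_forall fun y => hB δ y)

lemma Peq_add {Φ : ℝ → ℝ → ℂ} (hm : ∀ δ > 0, Measurable (Φ δ)) {B : ℝ} (hB : ∀ δ y, ‖Φ δ y‖ ≤ B) {c : ℂ} {f g : ℝ → ℂ}
    (hf : IntegrableOn f (Set.Ioc 0 1)) (hg : IntegrableOn g (Set.Ioc 0 1)) (h1 : Peq Φ c f) (h2 : Peq Φ c g) :
    Peq Φ c (fun y => f y + g y) := by
  unfold Peq
  rw [integral_add hf hg, add_mul]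
  refine (h1.add h2).congr' ?_
  filter_upwards [self_mem_nhdsWithin] with δ hδ
  rw [← integral_add (Peq_int hm hB hf hδ) (Peq_int hm hB hg hδ)]
  simp only [add_mul]

lemma Peq_smul {Φ : ℝ → ℝ → ℂ} {c : ℂ} {f : ℝ → ℂ} (a : ℂ) (h1 : Peq Φ c f) :
    Peq Φ c (fun y => a * f y) := by
  unfold Peq
  rw [integral_const_mul, mul_assoc]
  refine (h1.const_mul a).congr' ?_
  filter_upwards [self_mem_nhdsWithin] with δ hδ
  rw [← integral_const_mul]
  simp only [mul_assoc]

lemma Peq_approx {Φ : ℝ → ℝ → ℂ} (hm : ∀ δ > 0, Measurable (Φ δ)) {B : ℝ} (hB : ∀ δ y, ‖Φ δ y‖ ≤ B) {c : ℂ} {f : ℝ → ℂ}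
    (hf : IntegrableOn f (Set.Ioc 0 1)) 
    (h : ∀ ε > 0, ∃ g : ℝ → ℂ, IntegrableOn g (Set.Ioc 0 1) ∧ Peq Φ c g ∧ ∫ y in Set.Ioc (0:ℝ) 1, ‖f y - g y‖ ≤ ε) :
    Peq Φ c f := by
  have hB0 : 0 ≤ B := (norm_nonneg _).trans (hB 0 0)
  unfold Peq
  rw [Metric.tendsto_nhds]
  intro ε hε
  set ε1 := ε / (2 * (B + ‖c‖ + 1)) with hε1
  have hε10 : 0 < ε1 := by positivity
  obtain ⟨g, hg, hP, hfg⟩ := h ε1 hε10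
  unfold Peq at hP
  rw [Metric.tendsto_nhds] at hP
  filter_upwards [self_mem_nhdsWithin, hP (ε / 2) (by positivity)] with δ hδ hd
  rw [dist_eq_norm] at hd ⊢
  have hfi := Peq_int hm hB hf hδ
  have hgi := Peq_int hm hB hg hδ
  have e : (∫ y in Set.Ioc (0:ℝ) 1, f y * Φ δ y) - (∫ y in Set.Ioc (0:ℝ) 1, f y) * c = 
      (∫ y in Set.Ioc (0:ℝ) 1, (f y - g y) * Φ δ y) + ((∫ y in Set.Ioc (0:ℝ) 1, g y * Φ δ y) - (∫ y in Set.Ioc (0:ℝ) 1, g y) * c)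
      - (∫ y in Set.Ioc (0:ℝ) 1, (f y - g y)) * c := by
    simp only [sub_mul]
    rw [integral_sub hfi hgi, integral_sub hf hg]
    ring
  have b1 : ‖∫ y in Set.Ioc (0:ℝ) 1, (f y - g y) * Φ δ y‖ ≤ ε1 * B := by
    refine (norm_integral_le_of_norm_le (g := fun y => ‖f y - g y‖ * B) ((hf.sub hg).norm.mul_const B) 
      (Eventually.of_forall fun y => ?_)).trans ?_
    · rw [norm_mul]
      gcongr
      exact hB δ y
    · rw [integral_mul_const]
      gcongr
  have b2 : ‖∫ y in Set.Ioc (0:ℝ) 1, (f y - g y)‖ ≤ ε1 := (norm_integral_le_integral_norm _).trans hfg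
  rw [e]
  calc _ ≤ ε1 * B + ‖(∫ y in Set.Ioc (0:ℝ) 1, g y * Φ δ y) - (∫ y in Set.Ioc (0:ℝ) 1, g y) * c‖ + ε1 * ‖c‖ := by
        refine (norm_sub_le _ _).trans (add_le_add ((norm_add_le _ _).trans (add_le_add b1 le_rfl)) ?_)
        rw [norm_mul]
        gcongr
    _ < ε1 * B + ε / 2 + ε1 * ‖c‖ := by gcongr
    _ ≤ ε1 * (B + ‖c‖ + 1) + ε / 2 := by nlinarith
    _ = ε := by rw [hε1]; field_simp; ring

lemma cont_circle_int (h : C(UnitAddCircle, ℂ)) : IntegrableOn (fun y : ℝ => h (y : UnitAddCircle)) (Set.Ioc 0 1) := by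
  have hc : Continuous (fun y : ℝ => h (y : UnitAddCircle)) := h.continuous.comp (AddCircle.continuous_mk' 1)
  exact (hc.integrableOn_Icc (a := 0) (b := 1)).mono_set Set.Ioc_subset_Icc_self

lemma Peq_cont {Φ : ℝ → ℝ → ℂ} (hm : ∀ δ > 0, Measurable (Φ δ)) {B : ℝ} (hB : ∀ δ y, ‖Φ δ y‖ ≤ B) {c : ℂ}
    (hfo : ∀ m : ℤ, Peq Φ c (fun y => fourier m (y : UnitAddCircle))) (h : C(UnitAddCircle, ℂ)) :
    Peq Φ c (fun y => h (y : UnitAddCircle)) := by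
  have hspan : ∀ u ∈ Submodule.span ℂ (Set.range (fourier : ℤ → C(UnitAddCircle, ℂ))), Peq Φ c (fun y => u (y : UnitAddCircle)) := by
    intro u hu
    induction hu using Submodule.span_induction with
    | mem x hx =>
      obtain ⟨m, rfl⟩ := hx
      exact hfo m
    | zero => simp [Peq]
    | add x y _ _ h1 h2 => exact Peq_add hm hB (cont_circle_int x) (cont_circle_int y) h1 h2
    | smul a x _ h1 => exact Peq_smul a h1
  refine Peq_approx hm hB (cont_circle_int h) fun ε hε => ?_
  have hmem : h ∈ (Submodule.span ℂ (Set.range (fourier : ℤ → C(UnitAddCircle, ℂ)))).topologicalClosure := by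
    rw [span_fourier_closure_eq_top]
    trivial
  obtain ⟨u, hu, hd⟩ := Metric.mem_closure_iff.1 (show h ∈ closure _ from hmem) ε hε
  refine ⟨fun y => u (y : UnitAddCircle), cont_circle_int u, hspan u hu, ?_⟩
  have hb : ∀ y : ℝ, ‖h (y : UnitAddCircle) - u (y : UnitAddCircle)‖ ≤ ε := fun y => by
    rw [← dist_eq_norm]
    exact (ContinuousMap.dist_apply_le_dist _).trans hd.le
  refine (integral_mono_of_nonneg (Eventually.of_forall fun y => norm_nonneg _) (g := fun _ => ε) (by simp) 
    (Eventually.of_forall hb)).trans ?_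
  simp

lemma Peq_set {Φ : ℝ → ℝ → ℂ} (hm : ∀ δ > 0, Measurable (Φ δ)) {B : ℝ} (hB : ∀ δ y, ‖Φ δ y‖ ≤ B) {c : ℂ}
    (hfo : ∀ m : ℤ, Peq Φ c (fun y => fourier m (y : UnitAddCircle))) {D : Set ℝ} (hD : MeasurableSet D) :
    Peq Φ c (D.indicator 1) := by
  have hDi : IntegrableOn (D.indicator (1 : ℝ → ℂ)) (Set.Ioc 0 1) := by
    apply Integrable.indicator _ hD
    change IntegrableOn (fun _ : ℝ => (1:ℂ)) (Set.Ioc 0 1) volume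
    simp
  refine Peq_approx hm hB hDi fun ε hε => ?_
  set f : UnitAddCircle → ℂ := AddCircle.liftIoc (1:ℝ) 0 (D.indicator (1 : ℝ → ℂ)) with hf
  have hfi : Integrable f := by
    rw [← memLp_one_iff_integrable]
    apply MemLp.memLp_liftIoc
    rw [memLp_one_iff_integrable, zero_add]
    exact hDi
  obtain ⟨g, hg, _⟩ := hfi.exists_boundedContinuous_integral_sub_le hε
  refine ⟨fun y => g.toContinuousMap (y : UnitAddCircle), cont_circle_int _, Peq_cont hm hB hfo _, ?_⟩
  refine le_trans (le_of_eq ?_) hg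
  rw [← UnitAddCircle.integral_preimage 0, zero_add]
  refine setIntegral_congr_fun measurableSet_Ioc fun y hy => ?_
  have : f (y : UnitAddCircle) = D.indicator (1 : ℝ → ℂ) y := AddCircle.liftIoc_coe_apply (by rwa [zero_add])
  simp only [this]
  rfl

lemma F_meas {F : ℝ → ℝ} (hF : Continuous F) {δ : ℝ} (hδ : 0 < δ) :
    Measurable (fun y => F (Real.log (qmin y δ) + (1 / 2) * Real.log δ)) := by
  have h1 : Measurable (fun y => ((qmin y δ : ℕ) : ℝ)) := measurable_from_nat.comp (qmin_meas hδ)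
  exact hF.measurable.comp ((Real.measurable_log.comp h1).add_const _)

lemma cs_set {F : ℝ → ℝ} (hF : Continuous F) {R : ℝ} (hR : 0 < R) (hFR : ∀ s, R ≤ |s| → F s = 0)
    {D : Set ℝ} (hD : MeasurableSet D) (hD1 : D ⊆ Set.Icc 0 1) :
    Tendsto (fun δ : ℝ => ∫ y in D, F (Real.log (qmin y δ) + (1 / 2) * Real.log δ)) (nhdsWithin 0 (Set.Ioi 0))
      (nhds ((volume D).toReal * ∫ s, F s * etaLog s)) := by
  obtain ⟨B, hB⟩ : ∃ B, ∀ s, |F s| ≤ B := by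
    obtain ⟨B, hB⟩ := isCompact_Icc.exists_bound_of_continuousOn (s := Set.Icc (-R) R) hF.continuousOn
    refine ⟨max B 0, fun s => ?_⟩
    rcases lt_or_ge |s| R with h | h
    · rw [abs_lt] at h
      exact (hB s ⟨h.1.le, h.2.le⟩).trans (le_max_left _ _)
    · rw [hFR s h, abs_zero]
      exact le_max_right _ _
  set Φ : ℝ → ℝ → ℂ := fun δ y => (F (Real.log (qmin y δ) + (1 / 2) * Real.log δ) : ℂ) with hΦ
  have hI : ∀ f : ℝ → ℂ, ∫ y in Set.Ioc (0:ℝ) 1, D.indicator f y = ∫ y in D, f y := by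
    intro f
    rw [← integral_Icc_eq_integral_Ioc, setIntegral_indicator hD, Set.inter_eq_right.2 hD1]
  have h1 := Peq_set (Φ := Φ) (fun δ hδ => Complex.measurable_ofReal.comp (F_meas hF hδ)) (B := B)
    (fun δ y => by simp only [hΦ]; rw [Complex.norm_real]; exact hB _) (c := ((∫ s, F s * etaLog s : ℝ) : ℂ)) (fun m => by
      have := cs_fourier hF hR hFR m
      unfold Peq
      convert this using 3
      have h2 := UnitAddCircle.integral_preimage 0 (fun y : UnitAddCircle => fourier m y)
      rw [zero_add] at h2
      rw [h2, integral_fourier_unit]) hD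
  unfold Peq at h1
  rw [hI] at h1
  have e2 : ∫ y in D, (1 : ℝ → ℂ) y = ((volume D).toReal : ℂ) := by
    simp [Measure.real]
  rw [e2, ← Complex.ofReal_mul] at h1
  have h3 := (Complex.continuous_re.tendsto _).comp h1
  rw [Complex.ofReal_re] at h3
  refine h3.congr fun δ => ?_
  have e3 : ∫ y in Set.Ioc (0:ℝ) 1, D.indicator (1 : ℝ → ℂ) y * Φ δ y = ∫ y in D, Φ δ y := by
    rw [← hI]
    congr 1
    ext y
    by_cases hy : y ∈ D <;> simp [hy]
  simp only [Function.comp]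
  rw [e3]
  simp only [hΦ]
  rw [integral_complex_ofReal, Complex.ofReal_re]


lemma bern1 {q : ℕ} (hq : 1 ≤ q) {β : ℝ} (hβ : 0 < β) (hβ1 : β ≤ 1) :
    β * (q : ℝ) ^ (β - 1) ≤ (q : ℝ) ^ β - ((q : ℝ) - 1) ^ β := by
  have hqR : (1 : ℝ) ≤ q := by exact_mod_cast hq
  have hq0 : (0 : ℝ) < q := by linarith
  have h1 := rpow_one_add_le_one_add_mul_self (s := -(1 / (q : ℝ))) (p := β) (by
    rw [neg_le_neg_iff, div_le_one hq0]; exact hqR) hβ.le hβ1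
  have h0 : 0 ≤ 1 + -(1 / (q : ℝ)) := by
    have : 1 / (q : ℝ) ≤ 1 := by rw [div_le_one hq0]; exact hqR
    linarith
  have h2 : ((q : ℝ) - 1) = q * (1 + -(1 / (q : ℝ))) := by field_simp; ring
  rw [h2, Real.mul_rpow hq0.le h0, Real.rpow_sub_one hq0.ne']
  have h3 : 0 < (q : ℝ) ^ β := Real.rpow_pos_of_pos hq0 _
  have h4 := mul_le_mul_of_nonneg_left h1 h3.le
  have h5 : β * ((q : ℝ) ^ β / q) = (q : ℝ) ^ β - (q : ℝ) ^ β * (1 + β * -(1 / (q : ℝ))) := by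
    field_simp; ring
  linarith

lemma bern2 {q : ℕ} (hq : 2 ≤ q) {β : ℝ} (hβ : 0 < β) :
    β * (q : ℝ) ^ (-β - 1) ≤ ((q : ℝ) - 1) ^ (-β) - (q : ℝ) ^ (-β) := by
  have hqR : (2 : ℝ) ≤ q := by exact_mod_cast hq
  have hq0 : (0 : ℝ) < q := by linarith
  have h0 : 0 < 1 - (1 / (q : ℝ)) := by
    have : 1 / (q : ℝ) < 1 := by rw [div_lt_one hq0]; linarith
    linarith
  have h1 : 1 + β / q ≤ (1 - (1 / (q : ℝ))) ^ (-β) := by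
    rw [Real.rpow_def_of_pos h0]
    have h2 : Real.log (1 - (1 / (q : ℝ))) ≤ -(1 / (q : ℝ)) := by
      have := Real.log_le_sub_one_of_pos h0
      linarith
    have h3 := Real.add_one_le_exp (Real.log (1 - 1 / (q:ℝ)) * -β)
    have h4 : β / q = β * (1 / q) := by ring
    nlinarith
  have h2 : ((q : ℝ) - 1) = q * (1 - (1 / (q : ℝ))) := by field_simp
  rw [h2, Real.mul_rpow hq0.le h0.le, Real.rpow_sub_one hq0.ne']
  have h3 : 0 < (q : ℝ) ^ (-β) := Real.rpow_pos_of_pos hq0 _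
  have h4 := mul_le_mul_of_nonneg_left h1 h3.le
  have h5 : β * ((q : ℝ) ^ (-β) / q) = (q : ℝ) ^ (-β) * (1 + β / q) - (q : ℝ) ^ (-β) := by
    field_simp; ring
  linarith

lemma tele_le (c H : ℕ → ℝ) (h : ∀ q, 1 ≤ q → c q ≤ H q - H (q - 1)) (N : ℕ) :
    ∑ q ∈ Finset.Icc 1 N, c q ≤ H N - H 0 := by
  induction N with
  | zero => simp
  | succ n ih =>
    rw [Finset.sum_Icc_succ_top (by omega)]
    have := h (n + 1) (by omega)
    rw [Nat.add_sub_cancel] at this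
    linarith

lemma moment_sum {β : ℝ} (hβ : 0 < β) (hβ1 : β ≤ 1) {δ : ℝ} (hδ : 0 < δ) (hδ1 : δ ≤ 1) (N : ℕ) :
    ∑ q ∈ Finset.Icc 1 N, Real.exp ((2 - β) * |Real.log q + (1 / 2) * Real.log δ|) * volume.real (lev δ q) ≤ 17 / β := by
  set ε := Real.sqrt δ with hε
  have hε0 : 0 < ε := Real.sqrt_pos.2 hδ
  have hε1 : ε ≤ 1 := by rw [hε]; exact Real.sqrt_le_one.2 hδ1
  have hδε : δ = ε ^ 2 := (Real.sq_sqrt hδ.le).symm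
  have hSexp : ∀ q : ℕ, 1 ≤ q → Real.log q + (1 / 2) * Real.log δ = Real.log (ε * q) := by
    intro q hq
    rw [Real.log_mul hε0.ne' (by positivity), Real.log_sqrt hδ.le]
    ring
  set M := ⌊1 / ε⌋₊ with hM
  have hM1 : 1 ≤ M := by
    apply Nat.le_floor
    rw [Nat.cast_one, le_div_iff₀ hε0]
    linarith
  have hM1R : (1 : ℝ) ≤ M := by exact_mod_cast hM1
  have hMle : ε * M ≤ 1 := by
    have := Nat.floor_le (show 0 ≤ 1 / ε by positivity)
    rw [le_div_iff₀ hε0] at this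
    linarith
  have hMge : 1 / 2 ≤ ε * M := by
    have := Nat.lt_floor_add_one (1 / ε)
    rw [div_lt_iff₀ hε0] at this
    nlinarith
  set H : ℕ → ℝ := fun q => ε ^ β * ((min q M : ℕ) : ℝ) ^ β / β - 8 * ε ^ (-β) * ((max q M : ℕ) : ℝ) ^ (-β) / β with hH
  have key : ∀ q : ℕ, 1 ≤ q → Real.exp ((2 - β) * |Real.log q + (1 / 2) * Real.log δ|) * volume.real (lev δ q) ≤ H q - H (q - 1) := by
    intro q hq
    have hq0 : (0 : ℝ) < q := by exact_mod_cast hq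
    have ht : 0 < ε * q := by positivity
    have hcast : ((q - 1 : ℕ) : ℝ) = (q : ℝ) - 1 := by rw [Nat.cast_sub hq, Nat.cast_one]
    rw [hSexp q hq]
    rcases le_or_gt q M with h | h
    · have h1 : ε * q ≤ 1 := by
        have : (q : ℝ) ≤ M := by exact_mod_cast h
        nlinarith
      have e1 : Real.exp ((2 - β) * |Real.log (ε * q)|) = (ε * q) ^ (β - 2) := by
        rw [Real.rpow_def_of_pos ht, abs_of_nonpos (Real.log_nonpos ht.le h1)]
        congr 1
        ring
      have e2 : H q - H (q - 1) = ε ^ β * ((q : ℝ) ^ β - ((q : ℝ) - 1) ^ β) / β := by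
        simp only [hH]
        rw [min_eq_left h, min_eq_left (show q - 1 ≤ M by omega), max_eq_right h, max_eq_right (show q - 1 ≤ M by omega), hcast]
        ring
      rw [e1, e2]
      calc (ε * q) ^ (β - 2) * volume.real (lev δ q) ≤ (ε * q) ^ (β - 2) * (q * δ) := by
            gcongr
            exact lev_vol_le' hδ hδ1 hq
        _ = ε ^ β * (β * (q : ℝ) ^ (β - 1)) / β := by
            rw [Real.mul_rpow hε0.le hq0.le, Real.rpow_sub hε0, Real.rpow_sub hq0, Real.rpow_sub hq0, hδε]
            rw [Real.rpow_two, Real.rpow_two, Real.rpow_one]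
            field_simp
        _ ≤ _ := by
            gcongr
            exact bern1 hq hβ hβ1
    · have h1 : 1 < ε * q := by
        have := (Nat.floor_lt (show 0 ≤ 1 / ε by positivity)).1 h
        rw [div_lt_iff₀ hε0] at this
        linarith
      have hq2 : 2 ≤ q := by omega
      have e1 : Real.exp ((2 - β) * |Real.log (ε * q)|) = (ε * q) ^ (2 - β) := by
        rw [Real.rpow_def_of_pos ht, abs_of_pos (Real.log_pos h1)]
        congr 1
        ring
      have e2 : H q - H (q - 1) = 8 * ε ^ (-β) * (((q : ℝ) - 1) ^ (-β) - (q : ℝ) ^ (-β)) / β := by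
        simp only [hH]
        rw [max_eq_left h.le, max_eq_left (show M ≤ q - 1 by omega), min_eq_right h.le, min_eq_right (show M ≤ q - 1 by omega), hcast]
        ring
      rw [e1, e2]
      calc (ε * q) ^ (2 - β) * volume.real (lev δ q) ≤ (ε * q) ^ (2 - β) * (8 / (δ * q ^ 3)) := by
            gcongr
            exact lev_vol_tail hδ hq2
        _ = 8 * ε ^ (-β) * (β * (q : ℝ) ^ (-β - 1)) / β := by
            rw [Real.mul_rpow hε0.le hq0.le, Real.rpow_sub hε0, Real.rpow_sub hq0, Real.rpow_sub hq0, hδε, Real.rpow_neg hε0.le, Real.rpow_neg hq0.le]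
            rw [Real.rpow_two, Real.rpow_two, Real.rpow_one]
            field_simp
        _ ≤ _ := by
            gcongr
            exact bern2 hq2 hβ
  refine (tele_le _ H key N).trans ?_
  have a1 : H N ≤ 1 / β := by
    simp only [hH]
    have b1 : ε ^ β * ((min N M : ℕ) : ℝ) ^ β ≤ 1 := by
      rw [← Real.mul_rpow hε0.le (by positivity)]
      apply Real.rpow_le_one (by positivity) _ hβ.le
      refine le_trans ?_ hMle
      gcongr
      exact min_le_right _ _
    have b2 : ε ^ β * ((min N M : ℕ) : ℝ) ^ β / β ≤ 1 / β := by gcongr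
    have b3 : 0 ≤ 8 * ε ^ (-β) * ((max N M : ℕ) : ℝ) ^ (-β) / β := by positivity
    linarith
  have a2 : -H 0 ≤ 16 / β := by
    simp only [hH]
    rw [min_eq_left (Nat.zero_le M), max_eq_right (Nat.zero_le M), Nat.cast_zero, Real.zero_rpow hβ.ne']
    have b1 : ε ^ (-β) * (M : ℝ) ^ (-β) ≤ 2 := by
      rw [← Real.mul_rpow hε0.le (by positivity)]
      calc (ε * M) ^ (-β) ≤ (1 / 2 : ℝ) ^ (-β) := Real.rpow_le_rpow_of_nonpos (by norm_num) hMge (by linarith)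
        _ = 2 ^ β := by rw [one_div, Real.inv_rpow (by norm_num), Real.rpow_neg (by norm_num), inv_inv]
        _ ≤ 2 ^ (1:ℝ) := Real.rpow_le_rpow_of_exponent_le (by norm_num) hβ1
        _ = 2 := Real.rpow_one 2
    have b2 : 8 * ε ^ (-β) * (M : ℝ) ^ (-β) / β ≤ 16 / β := by
      gcongr
      linarith
    have : -(ε ^ β * 0 / β - 8 * ε ^ (-β) * (M : ℝ) ^ (-β) / β) = 8 * ε ^ (-β) * (M : ℝ) ^ (-β) / β := by ring
    rw [this]
    exact b2
  have : (17:ℝ) / β = 1 / β + 16 / β := by ring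
  linarith

lemma comp_int {F : ℝ → ℝ} (hF : Continuous F) {δ : ℝ} (hδ : 0 < δ) : 
    IntegrableOn (fun y => F (Real.log (qmin y δ) + (1 / 2) * Real.log δ)) (Set.Icc 0 1) := by
  obtain ⟨N, hN⟩ := qmin_bdd hδ
  refine Measure.integrableOn_of_bounded (M := ∑ q ∈ Finset.range (N + 1), ‖F (Real.log q + (1 / 2) * Real.log δ)‖) (by simp)
    (F_meas hF hδ).aestronglyMeasurable (Eventually.of_forall fun y => ?_)
  exact Finset.single_le_sum (f := fun q : ℕ => ‖F (Real.log q + (1 / 2) * Real.log δ)‖) (fun _ _ => norm_nonneg _)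
    (Finset.mem_range.2 (Nat.lt_succ_of_le (hN y)))

lemma moment_bound {β : ℝ} (hβ : 0 < β) (hβ1 : β ≤ 1) {δ : ℝ} (hδ : 0 < δ) (hδ1 : δ ≤ 1) :
    ∫ y in Set.Icc (0:ℝ) 1, Real.exp ((2 - β) * |Real.log (qmin y δ) + (1 / 2) * Real.log δ|) ≤ 17 / β := by
  obtain ⟨N, hN⟩ := qmin_bdd hδ
  refine le_trans (le_of_eq ?_) (moment_sum hβ hβ1 hδ hδ1 N)
  have h := integral_decomp hδ hN (f := fun _ => 1) (by simp) 
    (fun q => (Real.exp ((2 - β) * |Real.log q + (1 / 2) * Real.log δ|) : ℂ))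
  rw [integral_Icc_eq_integral_Ioc]
  simp only [one_mul, setIntegral_const] at h
  rw [integral_complex_ofReal] at h
  apply Complex.ofReal_injective
  rw [h]
  push_cast
  refine Finset.sum_congr rfl fun q _ => ?_
  rw [← Complex.coe_smul, smul_eq_mul, mul_one]


lemma etaLog_nonneg (s : ℝ) : 0 ≤ etaLog s := by
  rw [etaLog_eq]
  have := Wint_nonneg s
  positivity

lemma etaLog_cont : Continuous etaLog := by
  have : etaLog = fun s => 6 / Real.pi ^ 2 * (Real.exp (2 * s) * Wint s) := funext etaLog_eq
  rw [this]
  have := Wint_cont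
  fun_prop

lemma etaLog_le (s : ℝ) : etaLog s ≤ 6 / Real.pi ^ 2 * (16 * Real.exp (-2 * |s|)) := by
  rw [etaLog_eq]
  refine mul_le_mul_of_nonneg_left ?_ (by positivity)
  rcases le_total s 0 with h | h
  · rw [abs_of_nonpos h]
    have := Wint_le_one s
    have e : -2 * -s = 2 * s := by ring
    rw [e]
    have := Real.exp_pos (2 * s)
    nlinarith
  · rw [abs_of_nonneg h]
    have := Wint_le s
    have e : Real.exp (-2 * s) = Real.exp (2 * s) * Real.exp (-4 * s) := by
      rw [← Real.exp_add]
      congr 1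
      ring
    rw [e]
    have := Real.exp_pos (2 * s)
    nlinarith

lemma exp_abs_int {β : ℝ} (hβ : 0 < β) : Integrable (fun s : ℝ => Real.exp (-β * |s|)) := by
  rw [← integrableOn_univ, ← Set.Iic_union_Ioi (a := (0:ℝ))]
  refine IntegrableOn.union ?_ ?_
  · refine (integrableOn_exp_mul_Iic hβ 0).congr_fun (fun s hs => ?_) measurableSet_Iic
    simp only [abs_of_nonpos (show s ≤ 0 from hs)]
    congr 1
    ring
  · refine (integrableOn_exp_mul_Ioi (neg_lt_zero.2 hβ) 0).congr_fun (fun s hs => ?_) measurableSet_Ioi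
    simp only [abs_of_pos (show 0 < s from hs)]

lemma mom_eta_int {β : ℝ} (hβ : 0 < β) : Integrable (fun s : ℝ => Real.exp ((2 - β) * |s|) * etaLog s) := by
  refine ((exp_abs_int hβ).const_mul (6 / Real.pi ^ 2 * 16)).mono' ?_ (Eventually.of_forall fun s => ?_)
  · have := etaLog_cont
    exact Continuous.aestronglyMeasurable (by fun_prop)
  · rw [Real.norm_of_nonneg (mul_nonneg (Real.exp_pos _).le (etaLog_nonneg s))]
    have e : Real.exp (-β * |s|) = Real.exp ((2 - β) * |s|) * Real.exp (-2 * |s|) := by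
      rw [← Real.exp_add]
      congr 1
      ring
    rw [e]
    have := etaLog_le s
    have := Real.exp_pos ((2 - β) * |s|)
    nlinarith

/-- continuous cutoff -/
noncomputable def cutoff (R s : ℝ) : ℝ := max 0 (min 1 (R - |s|))

lemma cutoff_diff {F : ℝ → ℝ} {a β C : ℝ} (hβ : 0 ≤ β) (hab : a + 2 * β = 2) (hC : 0 < C)
    (hF : ∀ s, |F s| ≤ C * Real.exp (a * |s|)) (R s : ℝ) :
    |F s - F s * cutoff R s| ≤ C * Real.exp (-β * (R - 1)) * Real.exp ((2 - β) * |s|) := by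
  rcases le_total |s| (R - 1) with h | h
  · have : cutoff R s = 1 := by
      unfold cutoff
      rw [min_eq_left (by linarith), max_eq_right zero_le_one]
    rw [this, mul_one, sub_self, abs_zero]
    positivity
  · have h0 : 0 ≤ cutoff R s := le_max_left _ _
    have h1 : cutoff R s ≤ 1 := max_le zero_le_one (min_le_left _ _)
    have e : F s - F s * cutoff R s = F s * (1 - cutoff R s) := by ring
    rw [e, abs_mul, abs_of_nonneg (by linarith : 0 ≤ 1 - cutoff R s)]
    calc |F s| * (1 - cutoff R s) ≤ |F s| * 1 := by gcongr; linarith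
      _ ≤ C * Real.exp (a * |s|) := by rw [mul_one]; exact hF s
      _ ≤ C * Real.exp (-β * (R - 1) + (2 - β) * |s|) := by
          gcongr
          have : a = 2 - 2 * β := by linarith
          rw [this]
          nlinarith
      _ = _ := by rw [Real.exp_add, mul_assoc]

theorem smallest_denominator_log_test_function_limit
    (D : Set ℝ) (hD : D ⊆ Set.Icc 0 1) (hDI : D.OrdConnected)
    (a : ℝ) (ha0 : 0 ≤ a) (ha2 : a < 2) (C : ℝ) (hC : 0 < C)
    (F : ℝ → ℝ) (hFcont : Continuous F)
    (hFbound : ∀ s : ℝ, |F s| ≤ C * max (Real.exp (a * s)) (Real.exp (-a * s))) :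
    Tendsto (fun δ : ℝ =>
        ∫ x in D, F (Real.log (qmin x δ) + (1 / 2) * Real.log δ))
      (nhdsWithin 0 (Set.Ioi 0))
      (nhds ((volume D).toReal * ∫ s : ℝ, F s * etaLog s)) := by
  have hDm : MeasurableSet D := hDI.measurableSet
  set β := (2 - a) / 2 with hβdef
  have hβ : 0 < β := by rw [hβdef]; linarith
  have hβ1 : β ≤ 1 := by rw [hβdef]; linarith
  have hab : a + 2 * β = 2 := by rw [hβdef]; ring
  have hFb : ∀ s, |F s| ≤ C * Real.exp (a * |s|) := by
    intro s
    refine (hFbound s).trans ?_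
    gcongr
    refine max_le (Real.exp_le_exp.2 ?_) (Real.exp_le_exp.2 ?_)
    · exact mul_le_mul_of_nonneg_left (le_abs_self s) ha0
    · have := mul_le_mul_of_nonneg_left (neg_abs_le s) ha0
      linarith
  set E : ℝ → ℝ := fun s => Real.exp ((2 - β) * |s|) with hE
  have hEc : Continuous E := by simp only [hE]; fun_prop
  set K := ∫ s, E s * etaLog s with hK
  have hK0 : 0 ≤ K := integral_nonneg fun s => mul_nonneg (Real.exp_pos _).le (etaLog_nonneg s)
  have hvD : (volume D).toReal ≤ 1 := by
    have := measureReal_mono (μ := volume) hD (by simp)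
    simpa [Measure.real] using this
  rw [Metric.tendsto_nhds]
  intro ε hε
  obtain ⟨R, hR, hRε⟩ : ∃ R : ℝ, 0 < R ∧ C * Real.exp (-β * (R - 1)) * (17 / β + K + 1) < ε / 2 := by
    have h1 : Tendsto (fun R : ℝ => C * Real.exp (-β * (R - 1)) * (17 / β + K + 1)) atTop (nhds (C * 0 * (17 / β + K + 1))) := by
      refine Tendsto.mul_const _ (Tendsto.const_mul _ (Real.tendsto_exp_atBot.comp ?_))
      refine Tendsto.const_mul_atTop_of_neg (neg_lt_zero.2 hβ) ?_
      exact tendsto_atTop_add_const_right _ (-1) tendsto_id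
    rw [mul_zero, zero_mul] at h1
    have h2 := (h1.eventually (gt_mem_nhds (by positivity : 0 < ε / 2))).and (eventually_gt_atTop 0)
    obtain ⟨R, h3, h4⟩ := h2.exists
    exact ⟨R, h4, h3⟩
  set T := C * Real.exp (-β * (R - 1)) with hT
  have hT0 : 0 < T := by positivity
  set FR : ℝ → ℝ := fun s => F s * cutoff R s with hFRdef
  have hFRc : Continuous FR := by
    simp only [hFRdef, cutoff]
    fun_prop
  have hFR0 : ∀ s, R ≤ |s| → FR s = 0 := by
    intro s hs
    simp only [hFRdef, cutoff]
    rw [max_eq_left ((min_le_right _ _).trans (by linarith)), mul_zero]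
  have hdiff : ∀ s, |F s - FR s| ≤ T * E s := cutoff_diff hβ.le hab hC hFb R
  have hmain := cs_set hFRc hR hFR0 hDm hD
  rw [Metric.tendsto_nhds] at hmain
  -- limit side
  have hi2 : Integrable (fun s => E s * etaLog s) := mom_eta_int hβ
  have hiF : Integrable (fun s => F s * etaLog s) := by
    refine (hi2.const_mul C).mono' (hFcont.mul etaLog_cont).aestronglyMeasurable (Eventually.of_forall fun s => ?_)
    rw [Real.norm_eq_abs, abs_mul, abs_of_nonneg (etaLog_nonneg s), ← mul_assoc]
    refine mul_le_mul_of_nonneg_right ((hFb s).trans ?_) (etaLog_nonneg s)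
    simp only [hE]
    gcongr
    linarith
  have hiFR : Integrable (fun s => FR s * etaLog s) := by
    refine hiF.mono (hFRc.mul etaLog_cont).aestronglyMeasurable (Eventually.of_forall fun s => ?_)
    show ‖FR s * etaLog s‖ ≤ ‖F s * etaLog s‖
    rw [norm_mul (FR s), norm_mul (F s) (etaLog s)]
    refine mul_le_mul_of_nonneg_right ?_ (norm_nonneg (etaLog s))
    simp only [hFRdef]
    have h0 : 0 ≤ cutoff R s := le_max_left _ _
    have h1 : cutoff R s ≤ 1 := max_le zero_le_one (min_le_left _ _)
    rw [norm_mul, Real.norm_of_nonneg h0]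
    exact mul_le_of_le_one_right (norm_nonneg _) h1
  have hlim : |(∫ s, F s * etaLog s) - ∫ s, FR s * etaLog s| ≤ T * K := by
    rw [← integral_sub hiF hiFR, ← Real.norm_eq_abs, hK, ← integral_const_mul]
    refine norm_integral_le_of_norm_le (hi2.const_mul T) (Eventually.of_forall fun s => ?_)
    rw [← sub_mul, norm_mul, Real.norm_eq_abs, Real.norm_of_nonneg (etaLog_nonneg s), ← mul_assoc]
    exact mul_le_mul_of_nonneg_right (hdiff s) (etaLog_nonneg s)
  have hlt1 : ∀ᶠ δ : ℝ in nhdsWithin 0 (Set.Ioi 0), δ < 1 := 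
    (gt_mem_nhds one_pos).filter_mono nhdsWithin_le_nhds
  filter_upwards [self_mem_nhdsWithin, hlt1, hmain (ε / 2) (by positivity)] with δ hδ hδ1 hd
  replace hδ : 0 < δ := hδ
  have j1 := (comp_int hFcont hδ).mono_set hD
  have j2 := (comp_int hFRc hδ).mono_set hD
  have j3 := comp_int hEc hδ
  have hside : |(∫ x in D, F (Real.log (qmin x δ) + (1 / 2) * Real.log δ)) - 
      ∫ x in D, FR (Real.log (qmin x δ) + (1 / 2) * Real.log δ)| ≤ T * (17 / β) := by
    rw [← integral_sub j1 j2, ← Real.norm_eq_abs]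
    refine (norm_integral_le_of_norm_le ((j3.mono_set hD).const_mul T) (Eventually.of_forall fun y => hdiff _)).trans ?_
    rw [integral_const_mul]
    gcongr
    refine le_trans ?_ (moment_bound hβ hβ1 hδ hδ1.le)
    exact setIntegral_mono_set j3 (Eventually.of_forall fun y => (Real.exp_pos _).le) (Eventually.of_forall hD)
  rw [Real.dist_eq] at hd ⊢
  have hlim2 : |(volume D).toReal * (∫ s, FR s * etaLog s) - (volume D).toReal * ∫ s, F s * etaLog s| ≤ T * K := by
    rw [← mul_sub, abs_mul, abs_of_nonneg ENNReal.toReal_nonneg, abs_sub_comm]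
    have := mul_le_mul hvD hlim (abs_nonneg _) zero_le_one
    linarith
  rw [abs_le] at hside hlim2
  rw [abs_lt] at hd ⊢
  constructor <;> nlinarith
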